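/- arXiv:2311.02547 — 2 statements merged into one kernel-verified Lean document; each statement's English description precedes it below -/
import Mathlib

section
/- Let w ≥ 5 be an integer. Then Σ_{a+b+c+d=w, a≥2, b,c,d≥1} (2^{a−1} + 2^c)·ζ(a,b,c,d) = ((w+3)/2)·ζ(w). -/
/-- The multiple zeta value `ζ(s₁,…,s_d) = Σ_{k₁>⋯>k_d≥1} 1/(k₁^{s₁}⋯k_d^{s_d})`. -/
noncomputable def mzv {d : ℕ} (s : Fin d → ℕ) : ℝ :=
  ∑' k : {k : Fin d → ℕ // StrictAnti k ∧ ∀ i, 0 < k i},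
    ∏ i, (1 : ℝ) / (k.1 i : ℝ) ^ s i

namespace WS
open Finset

noncomputable def b (c : ℝ) (k : ℕ) : ℝ := if k = 0 then 0 else 1 / ((k : ℝ) - c)
noncomputable def P (u : ℕ → ℝ) (k : ℕ) : ℝ := ∑ j ∈ range k, u j
noncomputable def dl (x : ℝ) (k : ℕ) : ℝ := b x k - b 0 k

lemma b_zero (c : ℝ) : b c 0 = 0 := by simp [b]
lemma P_zero (u : ℕ → ℝ) : P u 0 = 0 := by simp [P]
lemma P_succ (u : ℕ → ℝ) (k : ℕ) : P u (k+1) = P u k + u k := by simp [P, sum_range_succ]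

noncomputable def S (u : ℕ → ℝ) : PowerSeries ℝ := PowerSeries.mk u
noncomputable def D (U : PowerSeries ℝ) : PowerSeries ℝ :=
  PowerSeries.X * PowerSeries.derivative ℝ U
noncomputable def Q : PowerSeries ℝ := PowerSeries.mk (fun n => if n = 0 then 0 else 1)

lemma coeff_D (U : PowerSeries ℝ) (n : ℕ) :
    PowerSeries.coeff n (D U) = n * PowerSeries.coeff n U := by
  unfold D
  cases n with
  | zero => simp
  | succ n =>
    rw [PowerSeries.coeff_succ_X_mul]
    rw [PowerSeries.coeff_derivative]; push_cast
    ring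

lemma D_mul (U V : PowerSeries ℝ) : D (U * V) = D U * V + U * D V := by
  unfold D
  rw [Derivation.leibniz]
  simp only [smul_eq_mul]
  ring
lemma D_add (U V : PowerSeries ℝ) : D (U + V) = D U + D V := by
  unfold D; rw [map_add]; ring
lemma D_sub (U V : PowerSeries ℝ) : D (U - V) = D U - D V := by
  unfold D; rw [map_sub]; ring
lemma D_two (U : PowerSeries ℝ) : D (2 * U) = 2 * D U := by
  rw [two_mul, D_add]; ring

lemma S_P (u : ℕ → ℝ) : S (P u) = Q * S u := by
  ext n
  rw [mul_comm, PowerSeries.coeff_mul, Finset.Nat.sum_antidiagonal_eq_sum_range_succ_mk, sum_range_succ]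
  simp only [S, Q, PowerSeries.coeff_mk, P]
  simp only [Nat.sub_self, if_true, mul_zero, add_zero]
  apply sum_congr rfl
  intro i hi
  have : n - i ≠ 0 := by have := mem_range.1 hi; omega
  simp [this]

lemma D_S (c : ℝ) (u : ℕ → ℝ) (hc : ∀ k : ℕ, k ≠ 0 → (k : ℝ) - c ≠ 0) :
    D (S (b c * P u)) = PowerSeries.C c * S (b c * P u) + Q * S u := by
  rw [← S_P]
  ext n
  rw [coeff_D, map_add, PowerSeries.coeff_C_mul]
  simp only [S, PowerSeries.coeff_mk, Pi.mul_apply]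
  rcases eq_or_ne n 0 with rfl | hn
  · simp [b_zero, P_zero]
  · have := hc n hn
    simp only [b, hn, if_false]
    field_simp
    ring

lemma D_B (c : ℝ) (hc : ∀ k : ℕ, k ≠ 0 → (k : ℝ) - c ≠ 0) :
    D (S (b c)) = PowerSeries.C c * S (b c) + Q := by
  ext n
  rw [coeff_D, map_add, PowerSeries.coeff_C_mul]
  simp only [S, Q, PowerSeries.coeff_mk]
  rcases eq_or_ne n 0 with rfl | hn
  · simp [b_zero]
  · have := hc n hn
    simp only [b, hn, if_false]
    field_simp
    ring

lemma uniq (c : ℝ) (hc : ∀ k : ℕ, (k : ℝ) - c ≠ 0) (Y Z : PowerSeries ℝ)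
    (h : D Y - PowerSeries.C c * Y = D Z - PowerSeries.C c * Z) : Y = Z := by
  ext n
  have := congrArg (PowerSeries.coeff n) h
  rw [map_sub, map_sub, coeff_D, coeff_D, PowerSeries.coeff_C_mul, PowerSeries.coeff_C_mul, ← sub_mul, ← sub_mul] at this
  exact mul_left_cancel₀ (hc n) this

lemma uniq0 (Y Z : PowerSeries ℝ) (h0 : PowerSeries.coeff 0 Y = PowerSeries.coeff 0 Z)
    (h : D Y = D Z) : Y = Z := by
  ext n
  rcases eq_or_ne n 0 with rfl | hn
  · exact h0
  have := congrArg (PowerSeries.coeff n) h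
  rw [coeff_D, coeff_D] at this
  exact mul_left_cancel₀ (by exact_mod_cast hn) this

section
variable (x : ℝ)
noncomputable def e2 : ℕ → ℝ := b x * P (b x)
noncomputable def e3 : ℕ → ℝ := b x * P (e2 x)
noncomputable def pm : ℕ → ℝ := b 0 * P (b x)
noncomputable def pom : ℕ → ℝ := b 0 * P (e2 x)
noncomputable def g : ℕ → ℝ := dl x * P (b x)
noncomputable def X : ℕ → ℝ := dl x * P (e2 x)
noncomputable def fm : ℕ → ℝ := b (2*x) * P (b x)
end

lemma shuffle_ps (x : ℝ) (h0 : 0 < x) (h1 : x < 1/2) :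
    S (b (2*x) * P (e3 x)) * 2 = 2 * (S (b x) * S (e3 x)) - S (e2 x) * S (e2 x) ∧
    2 * S (b x * P (b x * P (fm x))) = S (e2 x) * S (pm x) - S (b x) * S (pom x)
       - S (b x * P (b x * P (pm x))) + S (b x * P (pom x)) ∧
    2 * (2 * S (b 0 * P (b x * P (fm x)))) = S (pm x) * S (pm x) - 2 * S (b 0 * P (b x * P (pm x))) := by
  have hk : ∀ k : ℕ, k ≠ 0 → (1:ℝ) ≤ k := fun k hk => by exact_mod_cast Nat.one_le_iff_ne_zero.2 hk
  have c1 : ∀ k : ℕ, k ≠ 0 → (k : ℝ) - x ≠ 0 := fun k h => by have := hk k h; intro; linarith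
  have c2 : ∀ k : ℕ, k ≠ 0 → (k : ℝ) - 2*x ≠ 0 := fun k h => by have := hk k h; intro; linarith
  have c0 : ∀ k : ℕ, k ≠ 0 → (k : ℝ) - 0 ≠ 0 := fun k h => by have := hk k h; intro; linarith
  have d1 : ∀ k : ℕ, (k : ℝ) - x ≠ 0 := fun k => by
    rcases eq_or_ne k 0 with rfl | h
    · simp; linarith
    · exact c1 k h
  have d2 : ∀ k : ℕ, (k : ℝ) - 2*x ≠ 0 := fun k => by
    rcases eq_or_ne k 0 with rfl | h
    · simp; linarith
    · exact c2 k h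
  have hC : (PowerSeries.C (2*x) : PowerSeries ℝ) = 2 * PowerSeries.C x := by
    rw [map_mul]; rfl
  have hB := D_B x c1
  have hE2 : D (S (e2 x)) = _ := D_S x (b x) c1
  have hE3 : D (S (e3 x)) = _ := D_S x (e2 x) c1
  have hPM : D (S (pm x)) = _ := D_S 0 (b x) c0
  have hPOM : D (S (pom x)) = _ := D_S 0 (e2 x) c0
  have hF : D (S (fm x)) = _ := D_S (2*x) (b x) c2
  change _ = PowerSeries.C x * S (e2 x) + _ at hE2
  change _ = PowerSeries.C x * S (e3 x) + _ at hE3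
  change _ = PowerSeries.C 0 * S (pm x) + _ at hPM
  change _ = PowerSeries.C 0 * S (pom x) + _ at hPOM
  change _ = PowerSeries.C (2*x) * S (fm x) + _ at hF
  have hI := D_S (2*x) (e3 x) c2
  rw [hC] at hI hF
  rw [map_zero, zero_mul, zero_add] at hPM hPOM
  have L0 : S (b x) * S (b x) = 2 * S (fm x) := by
    apply uniq (2*x) d2
    rw [D_mul, D_two, hB, hF, hC]; ring
  have hbf := D_S x (fm x) c1
  have hbp := D_S x (pm x) c1
  have L1 : S (b x) * S (pm x) = 2 * S (b x * P (fm x)) + S (b x * P (pm x)) := by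
    apply uniq x d1
    rw [D_mul, D_add, D_two, hB, hPM, hbf, hbp]
    linear_combination Q * L0
  refine ⟨?_, ?_, ?_⟩
  · apply uniq (2*x) d2
    rw [mul_comm _ (2 : PowerSeries ℝ), D_sub, D_two, D_two, D_mul, D_mul, hI, hE3, hB, hE2, hC]; ring
  · apply uniq x d1
    rw [D_two, D_add, D_sub, D_sub, D_mul, D_mul, D_S x _ c1, D_S x _ c1, D_S x _ c1, hE2, hPM, hB, hPOM]
    linear_combination -Q * L1
  · apply uniq0
    · simp [S, PowerSeries.coeff_mul, pm, b_zero]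
    rw [D_two, D_two, D_sub, D_two, D_mul, D_S 0 _ c0, D_S 0 _ c0, hPM, map_zero]
    linear_combination -2 * Q * L1

lemma coeff_SS (u v : ℕ → ℝ) (N : ℕ) : PowerSeries.coeff N (S u * S v) =
    ∑ p ∈ antidiagonal N, u p.1 * v p.2 := by
  simp [PowerSeries.coeff_mul, S]

lemma P_sub (u v : ℕ → ℝ) : P (u - v) = P u - P v := by
  ext k; simp [P]

noncomputable def tt (x : ℝ) : ℕ → ℝ :=
  dl (2*x) * P (e3 x) + 2 * (dl x * P (b x * P (fm x)))

lemma shuffle (x : ℝ) (h0 : 0 < x) (h1 : x < 1/2) (N : ℕ) :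
    tt x N = ∑ p ∈ antidiagonal N, b x p.1 * X x p.2
      - 1/2 * ∑ p ∈ antidiagonal N, g x p.1 * g x p.2
      - b x N * P (X x) N + dl x N * P (b x * P (g x)) N := by
  obtain ⟨A, B, C⟩ := shuffle_ps x h0 h1
  have hX : X x = e3 x - pom x := by
    ext k; simp [X, e3, pom, dl]; ring
  have hg : g x = e2 x - pm x := by
    ext k; simp [g, e2, pm, dl]; ring
  have hXs : S (X x) = S (e3 x) - S (pom x) := by rw [hX]; ext; simp [S]
  have hgs : S (g x) = S (e2 x) - S (pm x) := by rw [hg]; ext; simp [S]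
  rw [← coeff_SS, ← coeff_SS, hXs, hgs]
  have h2 : ∀ U : PowerSeries ℝ, PowerSeries.coeff N (2 * U) = 2 * PowerSeries.coeff N U := by
    intro U; rw [two_mul, map_add, two_mul]
  have A' := congrArg (PowerSeries.coeff N) A
  have B' := congrArg (PowerSeries.coeff N) B
  have C' := congrArg (PowerSeries.coeff N) C
  have hsw : S (pm x) * S (e2 x) = S (e2 x) * S (pm x) := mul_comm _ _
  have hm : b x * (P (e2 x) - P (pm x)) = e3 x - b x * P (pm x) := by
    rw [mul_sub]; rfl
  rw [mul_comm] at A'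
  simp only [h2, map_sub, map_add, mul_sub, sub_mul, hsw] at A' B' C' ⊢
  rw [hX, hg, P_sub, P_sub, hm, P_sub]
  simp only [S, PowerSeries.coeff_mk] at A' B' C' ⊢
  simp only [tt, dl, Pi.add_apply, Pi.mul_apply, Pi.sub_apply, Pi.ofNat_apply] at A' B' C' ⊢
  simp only [pom] at B' ⊢
  linear_combination A' / 2 + B' - C' / 2
end WS
namespace WS
open Finset
local notation "o" => ENNReal.ofReal

lemma hasSum_of_ennreal {u v : ℕ → ℝ} (hu : ∀ k, 0 ≤ u k) (hv : ∀ k, 0 ≤ v k)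
    (h : ∑' k, o (u k) = ∑' k, o (v k)) {s : ℝ} (hs : HasSum v s) : HasSum u s := by
  have hvt : ∑' k, o (v k) = o s := by
    rw [← hs.tsum_eq, ENNReal.ofReal_tsum_of_nonneg hv hs.summable]
  have hne : ∑' k, o (u k) ≠ ⊤ := by rw [h, hvt]; exact ENNReal.ofReal_ne_top
  have hsu : Summable u := by
    have := ENNReal.summable_toReal hne
    simpa [ENNReal.toReal_ofReal (hu _)] using this
  have h2 : o (∑' k, u k) = o s := by
    rw [ENNReal.ofReal_tsum_of_nonneg hu hsu, h, hvt]
  have h3 : ∑' k, u k = s :=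
    (ENNReal.ofReal_eq_ofReal_iff (tsum_nonneg hu) (hs.nonneg hv)).1 h2
  rw [← h3]; exact hsu.hasSum

lemma b_nonneg {x : ℝ} (h1 : x < 1) (k : ℕ) : 0 ≤ b x k := by
  unfold b
  split_ifs with h
  · exact le_rfl
  · have : (1:ℝ) ≤ k := by exact_mod_cast Nat.one_le_iff_ne_zero.2 h
    apply div_nonneg zero_le_one; linarith

lemma dl_eq {x : ℝ} (h1 : x < 1) (k : ℕ) : dl x k = x * b 0 k * b x k := by
  unfold dl b
  split_ifs with h
  · simp
  · have : (1:ℝ) ≤ k := by exact_mod_cast Nat.one_le_iff_ne_zero.2 h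
    have h2 : (k:ℝ) - x ≠ 0 := by intro; linarith
    have h3 : (k:ℝ) - 0 ≠ 0 := by intro; linarith
    field_simp
    ring

lemma dl_nonneg {x : ℝ} (h0 : 0 ≤ x) (h1 : x < 1) (k : ℕ) : 0 ≤ dl x k := by
  rw [dl_eq h1]
  exact mul_nonneg (mul_nonneg h0 (b_nonneg zero_lt_one k)) (b_nonneg h1 k)

lemma P_nonneg {u : ℕ → ℝ} (hu : ∀ k, 0 ≤ u k) (k : ℕ) : 0 ≤ P u k :=
  sum_nonneg fun i _ => hu i

noncomputable def C (x : ℝ) (n q : ℕ) : ℝ := ∏ i ∈ range q, (((i:ℝ) + 1) - x) / ((n:ℝ) + (i + 1) - x)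

lemma C_zero (x : ℝ) (n : ℕ) : C x n 0 = 1 := by simp [C]
lemma C_succ (x : ℝ) (n q : ℕ) : C x n (q+1) = C x n q * (((q:ℝ) + 1 - x) / ((n:ℝ) + (q + 1) - x)) := by
  simp only [C, prod_range_succ]

lemma C_succ_left {x : ℝ} (h1 : x < 1) (n q : ℕ) :
    C x (n+1) q = C x n q * (((n:ℝ) + 1 - x) / ((n:ℝ) + 1 + q - x)) := by
  have hn : (0:ℝ) ≤ n := n.cast_nonneg
  induction q with
  | zero =>
    simp only [C_zero, Nat.cast_zero, add_zero]
    rw [div_self (by intro; linarith)]; simp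
  | succ q ih =>
    have hq : (0:ℝ) ≤ q := q.cast_nonneg
    rw [C_succ, C_succ, ih]
    have k1 : (n:ℝ) + 1 + q - x ≠ 0 := by intro; linarith
    have k2 : (n:ℝ) + (q + 1) - x ≠ 0 := by intro; linarith
    have k3 : (n:ℝ) + 1 + (q + 1) - x ≠ 0 := by intro; linarith
    push_cast
    field_simp
    ring

lemma C_left_zero {x : ℝ} (h1 : x < 1) (q : ℕ) : C x 0 q = 1 := by
  unfold C
  apply prod_eq_one
  intro i _
  have hq : (0:ℝ) ≤ i := i.cast_nonneg
  push_cast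
  rw [zero_add]
  exact div_self (by intro; linarith)

lemma C_symm {x : ℝ} (h1 : x < 1) (n q : ℕ) : C x n q = C x q n := by
  induction n with
  | zero => rw [C_left_zero h1, C_zero]
  | succ n ih => rw [C_succ_left h1, C_succ, ih]; congr 3; ring

lemma C_nonneg {x : ℝ} (h1 : x < 1) (n q : ℕ) : 0 ≤ C x n q := by
  apply prod_nonneg
  intro i _
  have hq : (0:ℝ) ≤ i := i.cast_nonneg
  have hn : (0:ℝ) ≤ n := n.cast_nonneg
  apply div_nonneg <;> linarith

lemma ruleA {x : ℝ} (h1 : x < 1) (n q : ℕ) (hq : q ≠ 0) :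
    b x (n+1) * C x (n+1) q = b 0 q * (C x n q - C x (n+1) q) := by
  rw [C_succ_left h1]
  have hn : (0:ℝ) ≤ n := n.cast_nonneg
  have hq' : (1:ℝ) ≤ q := by exact_mod_cast Nat.one_le_iff_ne_zero.2 hq
  simp only [b, hq, if_false, Nat.succ_ne_zero, sub_zero]
  have k1 : (n:ℝ) + 1 + q - x ≠ 0 := by intro; linarith
  have k2 : (n:ℝ) + 1 - x ≠ 0 := by intro; linarith
  push_cast
  field_simp
  ring

lemma C_le {x : ℝ} (h0 : 0 ≤ x) (h1 : x < 1) (n q : ℕ) : C x n (q+1) ≤ 1 / ((n:ℝ) + 1 - x) := by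
  have hn : (0:ℝ) ≤ n := n.cast_nonneg
  induction q with
  | zero =>
    rw [C_succ, C_zero]; simp only [Nat.cast_zero, zero_add, one_mul]
    apply div_le_div_of_nonneg_right _ (by linarith); linarith
  | succ q ih =>
    have hq : (0:ℝ) ≤ q := q.cast_nonneg
    rw [C_succ]
    refine (mul_le_of_le_one_right (C_nonneg h1 _ _) ?_).trans ih
    push_cast
    apply div_le_one_of_le₀ <;> linarith

lemma C_tendsto {x : ℝ} (h0 : 0 ≤ x) (h1 : x < 1) (q : ℕ) (hq : q ≠ 0) :
    Filter.Tendsto (fun n => C x n q) Filter.atTop (nhds 0) := by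
  obtain ⟨q, rfl⟩ := Nat.exists_eq_succ_of_ne_zero hq
  refine squeeze_zero (fun n => C_nonneg h1 n _) (fun n => C_le h0 h1 n q) ?_
  apply Filter.Tendsto.div_atTop tendsto_const_nhds
  apply Filter.tendsto_atTop_add_const_right
  apply Filter.tendsto_atTop_add_const_right
  exact tendsto_natCast_atTop_atTop

lemma tA {x : ℝ} (h0 : 0 ≤ x) (h1 : x < 1) (n q : ℕ) (hq : q ≠ 0) :
    ∑' k, (if n < k then o (b x k * C x k q) else 0) = o (b 0 q * C x n q) := by
  have hs : HasSum (fun k => b x (n+1+k) * C x (n+1+k) q) (b 0 q * C x n q) := by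
    rw [hasSum_iff_tendsto_nat_of_nonneg (fun k => mul_nonneg (b_nonneg h1 _) (C_nonneg h1 _ _))]
    have : ∀ m, ∑ k ∈ range m, b x (n+1+k) * C x (n+1+k) q = b 0 q * (C x n q - C x (n+m) q) := by
      intro m
      induction m with
      | zero => simp
      | succ m ih =>
        rw [sum_range_succ, ih, show n+1+m = n+m+1 by ring, ruleA h1 _ _ hq, ← add_assoc]; ring
    simp only [this]
    have ht := (C_tendsto h0 h1 q hq).comp (Filter.tendsto_add_atTop_nat n)
    have := (ht.const_sub (C x n q)).const_mul (b 0 q)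
    simpa [add_comm] using this
  rw [← hs.tsum_eq, ENNReal.ofReal_tsum_of_nonneg
    (fun k => mul_nonneg (b_nonneg h1 _) (C_nonneg h1 _ _)) hs.summable]
  rw [← Summable.sum_add_tsum_nat_add' (f := fun k => if n < k then o (b x k * C x k q) else 0)
    (k := n+1) ENNReal.summable]
  rw [sum_eq_zero, zero_add]
  · apply tsum_congr
    intro k
    rw [if_pos (by omega), add_comm k]
  · intro i hi
    rw [if_neg]
    have := mem_range.1 hi; omega

lemma tB {x : ℝ} (h0 : 0 ≤ x) (h1 : x < 1) (n q : ℕ) (hn : n ≠ 0) :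
    ∑' r, (if q < r then o (b x r * C x n r) else 0) = o (b 0 n * C x n q) := by
  simp only [C_symm h1 n]
  exact tA h0 h1 q n hn

lemma oP {w : ℕ → ℝ} (hw : ∀ k, 0 ≤ w k) (k : ℕ) :
    o (P w k) = ∑' n, (if n < k then o (w n) else 0) := by
  rw [tsum_eq_sum (s := range k)]
  · unfold P
    rw [ENNReal.ofReal_sum_of_nonneg (fun i _ => hw i)]
    apply sum_congr rfl
    intro i hi
    rw [if_pos (mem_range.1 hi)]
  · intro n hn
    rw [if_neg (by simpa using hn)]

lemma O2 {x : ℝ} (h0 : 0 ≤ x) (h1 : x < 1) {w : ℕ → ℝ} (hw : ∀ k, 0 ≤ w k) (q : ℕ) (hq : q ≠ 0) :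
    ∑' k, o ((b x * P w) k * C x k q) = o (b 0 q) * ∑' n, o (w n * C x n q) := by
  have e : ∀ k, o ((b x * P w) k * C x k q) =
      ∑' n, o (w n) * (if n < k then o (b x k * C x k q) else 0) := by
    intro k
    rw [Pi.mul_apply, show b x k * P w k * C x k q = P w k * (b x k * C x k q) by ring,
      ENNReal.ofReal_mul (P_nonneg hw k), oP hw, ← ENNReal.tsum_mul_right]
    apply tsum_congr; intro n
    split_ifs <;> simp
  simp only [e]
  rw [ENNReal.tsum_comm, ← ENNReal.tsum_mul_left]
  apply tsum_congr; intro n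
  rw [ENNReal.tsum_mul_left, tA h0 h1 n q hq, ← ENNReal.ofReal_mul (hw n),
    ← ENNReal.ofReal_mul (b_nonneg zero_lt_one q)]
  congr 1; ring

lemma O1 {x : ℝ} (h0 : 0 ≤ x) (h1 : x < 1) {w : ℕ → ℝ} (hw : ∀ k, 0 ≤ w k) (q : ℕ) :
    ∑' k, o ((dl x * P w) k * C x k q) =
      ∑' r, if q < r then o (dl x r) * ∑' n, o (w n * C x n r) else 0 := by
  have e : ∀ k, o ((dl x * P w) k * C x k q) =
      ∑' r, (if q < r then o (x * b x r) * o ((b x * P w) k * C x k r) else 0) := by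
    intro k
    have hk := P_nonneg hw k
    have hb := b_nonneg h1 k
    rcases eq_or_ne k 0 with rfl | hk0
    · simp [b_zero, dl]
    rw [Pi.mul_apply, dl_eq h1, show x * b 0 k * b x k * P w k * C x k q =
      (x * b x k * P w k) * (b 0 k * C x k q) by ring,
      ENNReal.ofReal_mul (by positivity), ← tB h0 h1 k q hk0, ← ENNReal.tsum_mul_left]
    apply tsum_congr; intro r
    split_ifs
    · have := b_nonneg h1 r
      rw [← ENNReal.ofReal_mul (by positivity), ← ENNReal.ofReal_mul (by positivity)]
      congr 1; simp only [Pi.mul_apply]; ring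
    · simp
  simp only [e]
  rw [ENNReal.tsum_comm]
  apply tsum_congr; intro r
  by_cases hr : q < r
  · simp only [hr, if_true]
    have := b_nonneg h1 r
    rw [ENNReal.tsum_mul_left, O2 h0 h1 hw r (by omega), ← mul_assoc, ← ENNReal.ofReal_mul (by positivity), dl_eq h1]
    congr 2; ring
  · simp [hr]

lemma O1' {x : ℝ} (h0 : 0 ≤ x) (h1 : x < 1) {w : ℕ → ℝ} (hw : ∀ k, 0 ≤ w k) :
    ∑' k, o ((dl x * P w) k) = ∑' r, o (dl x r) * ∑' n, o (w n * C x n r) := by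
  have := O1 h0 h1 hw 0
  simp only [C_zero, mul_one] at this
  rw [this]
  apply tsum_congr; intro r
  rcases eq_or_ne r 0 with rfl | h
  · simp [dl, b_zero]
  · rw [if_pos (Nat.pos_of_ne_zero h)]

lemma O0 {x : ℝ} (h0 : 0 ≤ x) (h1 : x < 1) (q : ℕ) (hq : q ≠ 0) :
    ∑' k, o (b x k * C x k q) = o (b 0 q) := by
  have := tA h0 h1 0 q hq
  rw [C_left_zero h1, mul_one] at this
  rw [← this]
  apply tsum_congr; intro k
  rcases eq_or_ne k 0 with rfl | h
  · simp [b_zero]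
  · rw [if_pos (Nat.pos_of_ne_zero h)]

lemma e2_nonneg {x : ℝ} (h1 : x < 1) (k : ℕ) : 0 ≤ e2 x k :=
  mul_nonneg (b_nonneg h1 _) (P_nonneg (b_nonneg h1) _)
lemma e3_nonneg {x : ℝ} (h1 : x < 1) (k : ℕ) : 0 ≤ e3 x k :=
  mul_nonneg (b_nonneg h1 _) (P_nonneg (e2_nonneg h1) _)
lemma g_nonneg {x : ℝ} (h0 : 0 ≤ x) (h1 : x < 1) (k : ℕ) : 0 ≤ g x k :=
  mul_nonneg (dl_nonneg h0 h1 _) (P_nonneg (b_nonneg h1) _)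
lemma X_nonneg {x : ℝ} (h0 : 0 ≤ x) (h1 : x < 1) (k : ℕ) : 0 ≤ X x k :=
  mul_nonneg (dl_nonneg h0 h1 _) (P_nonneg (e2_nonneg h1) _)

lemma dl_a_nonneg {x : ℝ} (h0 : 0 ≤ x) (h1 : x < 1) (j k : ℕ) : 0 ≤ dl x k * b 0 k ^ j :=
  mul_nonneg (dl_nonneg h0 h1 _) (pow_nonneg (b_nonneg zero_lt_one _) _)

lemma Og {x : ℝ} (h0 : 0 ≤ x) (h1 : x < 1) :
    ∑' k, o (g x k) = ∑' k, o (dl x k * b 0 k ^ 1) := by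
  rw [g, O1' h0 h1 (b_nonneg h1)]
  apply tsum_congr; intro r
  rcases eq_or_ne r 0 with rfl | h
  · simp [dl, b_zero]
  · rw [O0 h0 h1 r h, ENNReal.ofReal_mul (dl_nonneg h0 h1 _), pow_one]

lemma Oe2 {x : ℝ} (h0 : 0 ≤ x) (h1 : x < 1) (q : ℕ) (hq : q ≠ 0) :
    ∑' k, o (e2 x k * C x k q) = o (b 0 q ^ 2) := by
  rw [e2, O2 h0 h1 (b_nonneg h1) q hq, O0 h0 h1 q hq, ← ENNReal.ofReal_mul (b_nonneg zero_lt_one q), sq]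

lemma OX {x : ℝ} (h0 : 0 ≤ x) (h1 : x < 1) :
    ∑' k, o (X x k) = ∑' k, o (dl x k * b 0 k ^ 2) := by
  rw [X, O1' h0 h1 (e2_nonneg h1)]
  apply tsum_congr; intro r
  rcases eq_or_ne r 0 with rfl | h
  · simp [dl, b_zero]
  · rw [Oe2 h0 h1 r h, ENNReal.ofReal_mul (dl_nonneg h0 h1 _)]

lemma Oe3 {x : ℝ} (h0 : 0 ≤ x) (h1 : x < 1) :
    ∑' k, o ((dl x * P (e3 x)) k) = ∑' k, o (dl x k * b 0 k ^ 3) := by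
  rw [O1' h0 h1 (e3_nonneg h1)]
  apply tsum_congr; intro r
  rcases eq_or_ne r 0 with rfl | h
  · simp [dl, b_zero]
  · rw [e3, O2 h0 h1 (e2_nonneg h1) r h, Oe2 h0 h1 r h, ← ENNReal.ofReal_mul (b_nonneg zero_lt_one r),
      ← ENNReal.ofReal_mul (dl_nonneg h0 h1 _)]
    congr 1; ring

lemma Obg {x : ℝ} (h0 : 0 ≤ x) (h1 : x < 1) :
    ∑' k, o ((dl x * P (b x * P (g x))) k) =
      ∑' k, o (dl x k * b 0 k ^ 1 * P (fun j => dl x j * b 0 j ^ 1) k) := by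
  have hg := g_nonneg h0 h1
  rw [O1' h0 h1 (w := b x * P (g x)) (fun k => mul_nonneg (b_nonneg h1 k) (P_nonneg hg k))]
  have e : ∀ r, o (dl x r) * ∑' n, o ((b x * P (g x)) n * C x n r) =
      ∑' q, o (dl x r * b 0 r ^ 1) * (if r < q then o (dl x q * b 0 q ^ 1) else 0) := by
    intro r
    rcases eq_or_ne r 0 with rfl | h
    · simp [dl, b_zero]
    rw [O2 h0 h1 hg r h, g, O1 h0 h1 (b_nonneg h1), ← mul_assoc, ← ENNReal.ofReal_mul (dl_nonneg h0 h1 _),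
      ← ENNReal.tsum_mul_left]
    apply tsum_congr; intro q
    split_ifs with hq
    · rw [O0 h0 h1 q (by omega), ← ENNReal.ofReal_mul (dl_nonneg h0 h1 _), pow_one, pow_one]
    · simp
  simp only [e]
  rw [ENNReal.tsum_comm]
  apply tsum_congr; intro q
  rw [ENNReal.ofReal_mul (dl_a_nonneg h0 h1 1 q), oP (fun k => dl_a_nonneg h0 h1 1 k), ← ENNReal.tsum_mul_left]
  apply tsum_congr; intro r
  split_ifs
  · rw [mul_comm]
  · simp

end WS
namespace WS
open Finset Filter Topology

lemma b_mono {x y : ℝ} (hxy : x ≤ y) (h1 : y < 1) (k : ℕ) : b x k ≤ b y k := by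
  unfold b
  split_ifs with h
  · exact le_rfl
  · have : (1:ℝ) ≤ k := by exact_mod_cast Nat.one_le_iff_ne_zero.2 h
    apply one_div_le_one_div_of_le <;> linarith

lemma b_le {x : ℝ} (h0 : 0 ≤ x) (h1 : x < 1) (k : ℕ) : b x k ≤ 1 / (1 - x) * b 0 k := by
  unfold b
  split_ifs with h
  · simp
  · have : (1:ℝ) ≤ k := by exact_mod_cast Nat.one_le_iff_ne_zero.2 h
    rw [sub_zero, one_div_mul_one_div]
    apply one_div_le_one_div_of_le
    · apply mul_pos <;> linarith
    · nlinarith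

lemma a_le_one (k : ℕ) : b 0 k ≤ 1 := by
  unfold b
  split_ifs with h
  · simp
  · have : (1:ℝ) ≤ k := by exact_mod_cast Nat.one_le_iff_ne_zero.2 h
    rw [sub_zero]
    apply div_le_one_of_le₀ this; linarith

lemma summable_a2 : Summable (fun k => b 0 k ^ 2) := by
  have := Real.summable_one_div_nat_pow (p := 2)
  refine (this.2 one_lt_two).congr ?_
  intro k
  unfold b
  split_ifs with h
  · simp [h]
  · simp

lemma summable_b2 {x : ℝ} (h0 : 0 ≤ x) (h1 : x < 1) : Summable (fun k => b x k ^ 2) := by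
  refine Summable.of_nonneg_of_le (fun k => sq_nonneg _) (fun k => ?_) (summable_a2.mul_left ((1/(1-x))^2))
  rw [← mul_pow]
  exact pow_le_pow_left₀ (b_nonneg h1 k) (b_le h0 h1 k) 2

lemma dl_le_b {x : ℝ} (k : ℕ) : dl x k ≤ b x k := by
  unfold dl; linarith [b_nonneg zero_lt_one k]

lemma a_le_b {x : ℝ} (h0 : 0 ≤ x) (h1 : x < 1) (k : ℕ) : b 0 k ≤ b x k := b_mono h0 h1 k

lemma summable_ab {x : ℝ} (h0 : 0 ≤ x) (h1 : x < 1) (i j : ℕ) :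
    Summable (fun k => b x k ^ (i+2) * b 0 k ^ j) := by
  refine Summable.of_nonneg_of_le (fun k => mul_nonneg (pow_nonneg (b_nonneg h1 k) _) (pow_nonneg (b_nonneg zero_lt_one k) _))
    (fun k => ?_) ((summable_b2 h0 h1).mul_left ((1/(1-x))^i))
  have hb := b_nonneg h1 k
  have ha := b_nonneg zero_lt_one k
  have hb' : b x k ≤ 1/(1-x) := (b_le h0 h1 k).trans
    (mul_le_of_le_one_right (by apply div_nonneg <;> linarith) (a_le_one k))
  calc b x k ^ (i+2) * b 0 k ^ j ≤ b x k ^ (i+2) * 1 := by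
        gcongr; exact pow_le_one₀ ha (a_le_one k)
    _ = b x k ^ i * b x k ^ 2 := by ring
    _ ≤ _ := by gcongr

lemma summable_dla {x : ℝ} (h0 : 0 ≤ x) (h1 : x < 1) (j : ℕ) :
    Summable (fun k => dl x k * b 0 k ^ (j+1)) := by
  refine Summable.of_nonneg_of_le (fun k => dl_a_nonneg h0 h1 _ k) (fun k => ?_) (summable_ab h0 h1 0 j)
  have hb := b_nonneg h1 k
  have ha := b_nonneg zero_lt_one k
  have := a_le_b h0 h1 k
  calc dl x k * b 0 k ^ (j+1) ≤ b x k * b 0 k ^ (j+1) := by gcongr; exact dl_le_b k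
    _ = b x k * (b 0 k ^ j * b 0 k) := by ring
    _ ≤ b x k * (b 0 k ^ j * b x k) := by gcongr
    _ = _ := by ring

lemma HX {x : ℝ} (h0 : 0 ≤ x) (h1 : x < 1) : HasSum (X x) (∑' k, dl x k * b 0 k ^ 2) :=
  hasSum_of_ennreal (X_nonneg h0 h1) (fun k => dl_a_nonneg h0 h1 2 k) (OX h0 h1) (summable_dla h0 h1 1).hasSum
lemma Hg {x : ℝ} (h0 : 0 ≤ x) (h1 : x < 1) : HasSum (g x) (∑' k, dl x k * b 0 k ^ 1) :=
  hasSum_of_ennreal (g_nonneg h0 h1) (fun k => dl_a_nonneg h0 h1 1 k) (Og h0 h1) (summable_dla h0 h1 0).hasSum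
lemma He3 {x : ℝ} (h0 : 0 ≤ x) (h1 : x < 1) : HasSum (dl x * P (e3 x)) (∑' k, dl x k * b 0 k ^ 3) :=
  hasSum_of_ennreal (fun k => mul_nonneg (dl_nonneg h0 h1 k) (P_nonneg (e3_nonneg h1) k))
   (fun k => dl_a_nonneg h0 h1 3 k) (Oe3 h0 h1) (summable_dla h0 h1 2).hasSum

lemma P_sq (h : ℕ → ℝ) (n : ℕ) : P h n ^ 2 = 2 * P (h * P h) n + P (h ^ 2) n := by
  induction n with
  | zero => simp [P_zero]
  | succ n ih =>
    simp only [P_succ, Pi.mul_apply, Pi.pow_apply]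
    linear_combination ih

lemma Hbg {x : ℝ} (h0 : 0 ≤ x) (h1 : x < 1) : HasSum (dl x * P (b x * P (g x)))
    (1/2 * (∑' k, dl x k * b 0 k ^ 1)^2 - 1/2 * ∑' k, (dl x k * b 0 k ^ 1)^2) := by
  set h : ℕ → ℝ := fun j => dl x j * b 0 j ^ 1 with hh
  have hs : Summable h := summable_dla h0 h1 0
  have hn : ∀ k, 0 ≤ h k := fun k => dl_a_nonneg h0 h1 1 k
  have hle : ∀ k, h k ≤ ∑' k, h k := fun k => hs.le_tsum k (fun j _ => hn j)
  have hs2 : Summable (fun k => h k ^ 2) := by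
    refine Summable.of_nonneg_of_le (fun k => sq_nonneg _) (fun k => ?_) (hs.mul_left (∑' k, h k))
    rw [sq]; exact mul_le_mul_of_nonneg_right (hle k) (hn k)
  have hsp : HasSum (h * P h) (1/2 * (∑' k, h k)^2 - 1/2 * ∑' k, h k ^ 2) := by
    refine (hasSum_iff_tendsto_nat_of_nonneg (f := h * P h) (fun k => mul_nonneg (hn k) (P_nonneg hn k)) _).2 ?_
    have e : ∀ n, ∑ i ∈ range n, (h * P h) i = 1/2 * P h n ^ 2 - 1/2 * P (h^2) n := by
      intro n; have := P_sq h n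
      change P (h * P h) n = _
      linarith
    simp only [e]
    exact ((hs.hasSum.tendsto_sum_nat.pow 2).const_mul _).sub (hs2.hasSum.tendsto_sum_nat.const_mul _)
  refine hasSum_of_ennreal ?_ (fun k => mul_nonneg (hn k) (P_nonneg hn k)) (Obg h0 h1) hsp
  exact fun k => mul_nonneg (dl_nonneg h0 h1 k) (P_nonneg (fun j => mul_nonneg (b_nonneg h1 j) (P_nonneg (g_nonneg h0 h1) j)) k)

noncomputable def XD (x : ℝ) : ℕ → ℝ :=
  b x ^ 2 * P (e2 x) + dl x * (P (b x ^ 2 * P (b x)) + P (b x * P (b x ^ 2)))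

lemma b_deriv {x : ℝ} (h1 : x < 1) (k : ℕ) : HasDerivAt (fun y => b y k) (b x k ^ 2) x := by
  by_cases h : k = 0
  · simpa [h, b] using hasDerivAt_const x (0:ℝ)
  · have : (1:ℝ) ≤ k := by exact_mod_cast Nat.one_le_iff_ne_zero.2 h
    have h2 : (k:ℝ) - x ≠ 0 := by intro; linarith
    have h3 := ((hasDerivAt_id x).const_sub (k:ℝ)).inv h2
    have e : (fun y => b y k) = (fun y => (k:ℝ) - id y)⁻¹ := by
      ext y; simp [b, h]
    rw [e]
    refine h3.congr_deriv ?_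
    simp [b, h]

lemma P_deriv {u : ℝ → ℕ → ℝ} {u' : ℕ → ℝ} {x : ℝ} (h : ∀ k, HasDerivAt (fun y => u y k) (u' k) x) (k : ℕ) :
    HasDerivAt (fun y => P (u y) k) (P u' k) x := by
  unfold P
  exact HasDerivAt.fun_sum fun i _ => h i

lemma X_deriv {x : ℝ} (h1 : x < 1) (k : ℕ) : HasDerivAt (fun y => X y k) (XD x k) x := by
  have hb := b_deriv h1
  have hd : HasDerivAt (fun y => dl y k) (b x k ^ 2) x := (hb k).sub_const _
  have hPb := P_deriv (u := b) hb
  have he : ∀ k, HasDerivAt (fun y => e2 y k) ((b x ^ 2 * P (b x) + b x * P (b x ^ 2)) k) x :=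
    fun k => (hb k).mul (hPb k)
  have := hd.mul (P_deriv he k)
  refine this.congr_deriv ?_
  have : P (b x ^ 2 * P (b x) + b x * P (b x ^ 2)) = P (b x ^ 2 * P (b x)) + P (b x * P (b x ^ 2)) := by
    ext; simp [P, sum_add_distrib]
  simp [XD, this]

lemma P_mono {u v : ℕ → ℝ} (h : ∀ k, u k ≤ v k) (k : ℕ) : P u k ≤ P v k := sum_le_sum fun i _ => h i

lemma XD_nonneg {x : ℝ} (h0 : 0 ≤ x) (h1 : x < 1) (k : ℕ) : 0 ≤ XD x k := by
  have hb := b_nonneg h1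
  have hd := dl_nonneg h0 h1 k
  have hP := P_nonneg hb
  have := P_nonneg (e2_nonneg h1) k
  have h3 : 0 ≤ P (b x ^ 2 * P (b x)) k := P_nonneg (fun j => mul_nonneg (pow_nonneg (hb j) 2) (hP j)) k
  have h4 : 0 ≤ P (b x * P (b x ^ 2)) k :=
    P_nonneg (fun j => mul_nonneg (hb j) (P_nonneg (fun i => pow_nonneg (hb i) 2) j)) k
  have := hb k
  simp only [XD, Pi.add_apply, Pi.mul_apply, Pi.pow_apply]
  positivity

lemma XD_mono {x y : ℝ} (h0 : 0 ≤ x) (hxy : x ≤ y) (h1 : y < 1) (k : ℕ) : XD x k ≤ XD y k := by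
  have hx1 : x < 1 := by linarith
  have hb := b_nonneg hx1
  have hb' := b_nonneg h1
  have hm := b_mono hxy h1
  have hm2 : ∀ j, b x j ^ 2 ≤ b y j ^ 2 := fun j => pow_le_pow_left₀ (hb j) (hm j) 2
  have hd : dl x k ≤ dl y k := sub_le_sub_right (hm k) _
  have hd0 := dl_nonneg h0 hx1 k
  have hP := P_nonneg hb
  have he2 : P (e2 x) k ≤ P (e2 y) k := P_mono (fun j => mul_le_mul (hm j) (P_mono hm j) (hP j) (hb' j)) k
  have h3 : P (b x ^ 2 * P (b x)) k ≤ P (b y ^ 2 * P (b y)) k :=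
    P_mono (fun j => mul_le_mul (hm2 j) (P_mono hm j) (hP j) (sq_nonneg _)) k
  have h4 : P (b x * P (b x ^ 2)) k ≤ P (b y * P (b y ^ 2)) k :=
    P_mono (fun j => mul_le_mul (hm j) (P_mono hm2 j) (P_nonneg (fun i => sq_nonneg _) j) (hb' j)) k
  have g3 : 0 ≤ P (b x ^ 2 * P (b x)) k := P_nonneg (fun j => mul_nonneg (pow_nonneg (hb j) 2) (hP j)) k
  have g4 : 0 ≤ P (b x * P (b x ^ 2)) k :=
    P_nonneg (fun j => mul_nonneg (hb j) (P_nonneg (fun i => pow_nonneg (hb i) 2) j)) k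
  have g2 := P_nonneg (e2_nonneg hx1) k
  simp only [XD, Pi.add_apply, Pi.mul_apply, Pi.pow_apply]
  exact add_le_add (mul_le_mul (hm2 k) he2 g2 (sq_nonneg _))
    (mul_le_mul hd (add_le_add h3 h4) (add_nonneg g3 g4) (hd0.trans hd))

lemma XD_summable {x : ℝ} (h0 : 0 ≤ x) (h1 : x < 1) : Summable (XD x) := by
  obtain ⟨y, hxy, hy⟩ := exists_between h1
  have hy0 : 0 ≤ y := by linarith
  refine Summable.of_nonneg_of_le (XD_nonneg h0 h1) (fun k => ?_)
    (((HX hy0 hy).summable.sub (HX h0 h1).summable).div_const (y - x))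
  obtain ⟨c, hc, he⟩ := exists_hasDerivAt_eq_slope (fun y => X y k) (fun y => XD y k) hxy
    (fun z hz => (X_deriv (by linarith [hz.2]) k).continuousAt.continuousWithinAt)
    (fun z hz => X_deriv (by linarith [hz.2]) k)
  rw [← he]
  exact XD_mono h0 hc.1.le (by linarith [hc.2]) k

lemma HXD {x : ℝ} (h0 : 0 < x) (h1 : x < 1) : HasSum (XD x) (∑' k, b x k ^ 2 * b 0 k ^ 2) := by
  obtain ⟨y, hxy, hy⟩ := exists_between h1
  have hy0 : 0 ≤ y := by linarith
  have hx : x ∈ Set.Ioo 0 y := ⟨h0, hxy⟩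
  have A : HasDerivAt (fun z => ∑' k, X z k) (∑' k, XD x k) x := by
    refine hasDerivAt_tsum_of_isPreconnected (g := fun k z => X z k) (g' := fun k z => XD z k)
      (u := XD y) (XD_summable hy0 hy) isOpen_Ioo isPreconnected_Ioo
      (fun k z hz => X_deriv (by linarith [hz.2]) k) (fun k z hz => ?_) hx (HX h0.le h1).summable hx
    rw [Real.norm_of_nonneg (XD_nonneg hz.1.le (by linarith [hz.2]) k)]
    exact XD_mono hz.1.le hz.2.le hy k
  have B : HasDerivAt (fun z => ∑' k, dl z k * b 0 k ^ 2) (∑' k, b x k ^ 2 * b 0 k ^ 2) x := by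
    refine hasDerivAt_tsum_of_isPreconnected (g := fun k z => dl z k * b 0 k ^ 2) (g' := fun k z => b z k ^ 2 * b 0 k ^ 2)
      (u := fun k => b y k ^ 2 * b 0 k ^ 2) (by simpa using summable_ab hy0 hy 0 2) isOpen_Ioo isPreconnected_Ioo
      (fun k z hz => ?_) (fun k z hz => ?_) hx (by simpa using summable_dla h0.le h1 1) hx
    · exact ((b_deriv (by linarith [hz.2]) k).sub_const _).mul_const _
    · rw [Real.norm_of_nonneg (by positivity)]
      have := b_nonneg (x := z) (by linarith [hz.2]) k
      have := b_mono hz.2.le hy k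
      gcongr
  have E : (fun z => ∑' k, X z k) =ᶠ[𝓝 x] (fun z => ∑' k, dl z k * b 0 k ^ 2) := by
    filter_upwards [isOpen_Ioo.mem_nhds hx] with z hz
    exact (HX hz.1.le (by linarith [hz.2])).tsum_eq
  rw [← A.unique (B.congr_of_eventuallyEq E)]
  exact (XD_summable h0.le h1).hasSum

lemma stuffle (u : ℕ → ℝ) (n : ℕ) :
    P (u * P u) n * P u n = 3 * P (u * P (u * P u)) n + P (u ^ 2 * P u) n + P (u * P (u^2)) n := by
  induction n with
  | zero => simp [P_zero]
  | succ n ih =>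
    simp only [P_succ, Pi.mul_apply, Pi.pow_apply]
    linear_combination ih + u n * P_sq u n

lemma HXB {x : ℝ} (h0 : 0 < x) (h1 : x < 1) : HasSum (fun m => X x m * P (b x) (m+1))
    (3 * ∑' k, dl x k * b 0 k ^ 3 + ∑' k, b x k ^ 2 * b 0 k ^ 2 - 1/x * ∑' k, dl x k * b 0 k ^ 2) := by
  refine ((((He3 h0.le h1).mul_left 3).add (HXD h0 h1)).sub ((HX h0.le h1).mul_left (1/x))).congr_fun ?_
  intro m
  have h := stuffle (b x) m
  have hd := dl_eq h1 m
  have hd' : b 0 m = b x m - dl x m := by unfold dl; ring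
  have hx : 1 / x * dl x m = b 0 m * b x m := by rw [hd]; field_simp
  have hx' : 1/x * (dl x m * P (e2 x) m) = b 0 m * b x m * P (e2 x) m := by rw [← hx]; ring
  simp only [X, XD, Pi.mul_apply, Pi.add_apply, Pi.pow_apply, P_succ, hx']
  simp only [e3, e2] at h ⊢
  rw [hd']
  linear_combination dl x m * h

end WS
namespace WS
open Finset Filter Topology

lemma conv_sum (u v : ℕ → ℝ) (K : ℕ) : ∑ N ∈ range K, ∑ p ∈ antidiagonal N, u p.1 * v p.2 =
    ∑ m ∈ range K, v m * P u (K - m) := by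
  induction K with
  | zero => simp
  | succ K ih =>
    rw [sum_range_succ, ih, ← Finset.Nat.sum_antidiagonal_swap,
      Finset.Nat.sum_antidiagonal_eq_sum_range_succ_mk, sum_range_succ, sum_range_succ, ← add_assoc,
      ← sum_add_distrib]
    congr 1
    · apply sum_congr rfl
      intro m hm
      have hm := mem_range.1 hm
      rw [show K + 1 - m = (K - m) + 1 by omega, P_succ]
      simp; ring
    · simp [P_succ, P_zero, mul_comm]

lemma abel_sum (u v : ℕ → ℝ) (K : ℕ) : ∑ N ∈ range K, u N * P v N =
    ∑ m ∈ range K, v m * (P u K - P u (m+1)) := by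
  induction K with
  | zero => simp
  | succ K ih =>
    rw [sum_range_succ, ih, sum_range_succ, sub_self, mul_zero, add_zero,
      show u K * P v K = ∑ m ∈ range K, u K * v m by rw [P, mul_sum], ← sum_add_distrib]
    apply sum_congr rfl
    intro m hm
    rw [P_succ u K]; ring

lemma b_anti {x : ℝ} (h1 : x < 1) (n m : ℕ) : b x (n + 1 + m) ≤ b x (m + 1) := by
  unfold b
  rw [if_neg (by omega), if_neg (by omega)]
  have : (0:ℝ) ≤ m := Nat.cast_nonneg m
  have : (0:ℝ) ≤ n := Nat.cast_nonneg n
  apply one_div_le_one_div_of_le <;> push_cast <;> linarith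

lemma Pb_sub {x : ℝ} (h1 : x < 1) (n m : ℕ) :
    P (b x) (n + 1 + m) ≤ P (b x) (n+1) + P (b x) (m+1) := by
  induction m with
  | zero => simp [P_succ, P_zero, b_zero]
  | succ m ih =>
    rw [← add_assoc, P_succ, P_succ (b x) (m+1)]
    linarith [b_anti h1 n m]

lemma Pb_mono {x : ℝ} (h1 : x < 1) (n m : ℕ) : P (b x) n ≤ P (b x) (n + m) := by
  induction m with
  | zero => simp
  | succ m ih => rw [← add_assoc, P_succ]; linarith [b_nonneg h1 (n+m)]

lemma b_tendsto {x : ℝ} (h0 : 0 ≤ x) (h1 : x < 1) : Tendsto (b x) atTop (𝓝 0) := by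
  have h := (summable_b2 h0 h1).tendsto_atTop_zero
  have := h.sqrt
  simp only [Real.sqrt_zero] at this
  refine this.congr fun k => ?_
  exact Real.sqrt_sq (b_nonneg h1 k)

lemma Pb_tendsto {x : ℝ} (h0 : 0 ≤ x) (h1 : x < 1) (m : ℕ) :
    Tendsto (fun n => P (b x) (n + m) - P (b x) n) atTop (𝓝 0) := by
  induction m with
  | zero => simp
  | succ m ih =>
    have := ih.add ((tendsto_add_atTop_iff_nat m).2 (b_tendsto h0 h1))
    rw [add_zero] at this
    refine this.congr fun n => ?_
    rw [← add_assoc, P_succ]; ring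

lemma lim_XB {x : ℝ} (h0 : 0 < x) (h1 : x < 1) :
    Tendsto (fun K => ∑ m ∈ range K, X x m * (P (b x) (K - m) + P (b x) (m+1) - P (b x) K)) atTop
      (𝓝 (∑' m, X x m * P (b x) (m+1))) := by
  let F : ℕ → ℕ → ℝ := fun K m => if m < K then X x m * (P (b x) (K - m) + P (b x) (m+1) - P (b x) K) else 0
  have hF : ∀ K, ∑' m, F K m = ∑ m ∈ range K, X x m * (P (b x) (K - m) + P (b x) (m+1) - P (b x) K) := by
    intro K
    rw [tsum_eq_sum (s := range K)]
    · apply sum_congr rfl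
      intro m hm
      simp only [F, if_pos (mem_range.1 hm)]
    · intro m hm
      simp only [F, if_neg (fun h => hm (mem_range.2 h))]
  refine Tendsto.congr hF ?_
  refine tendsto_tsum_of_dominated_convergence (bound := fun m => X x m * P (b x) (m+1)) (HXB h0 h1).summable ?_ ?_
  · intro m
    rw [← tendsto_add_atTop_iff_nat (m+1)]
    have := (((tendsto_add_atTop_iff_nat 1).2 (Pb_tendsto h0.le h1 m)).const_sub (P (b x) (m+1))).const_mul (X x m)
    rw [sub_zero] at this
    refine this.congr fun n => ?_
    simp only [F]
    rw [if_pos (by omega), show n + (m+1) - m = n + 1 by omega, show n + (m+1) = n + 1 + m by omega]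
    ring
  · refine Eventually.of_forall fun K m => ?_
    have hX := X_nonneg h0.le h1 m
    have hP := P_nonneg (b_nonneg h1) (m+1)
    simp only [F]
    split_ifs with h
    · obtain ⟨n, rfl⟩ : ∃ n, K = n + 1 + m := ⟨K - 1 - m, by omega⟩
      rw [show n + 1 + m - m = n + 1 by omega]
      have h2 := Pb_sub h1 n m
      have h3 := Pb_mono h1 (n+1) m
      rw [Real.norm_of_nonneg (mul_nonneg hX (by linarith))]
      apply mul_le_mul_of_nonneg_left _ hX
      linarith
    · simp only [norm_zero]; positivity

lemma fm_nonneg {x : ℝ} (h0 : 0 ≤ x) (h1 : x < 1/2) (k : ℕ) : 0 ≤ fm x k :=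
  mul_nonneg (b_nonneg (by linarith) k) (P_nonneg (b_nonneg (by linarith)) k)

lemma tt_nonneg {x : ℝ} (h0 : 0 ≤ x) (h1 : x < 1/2) (k : ℕ) : 0 ≤ tt x k := by
  have a1 := dl_nonneg (x := 2*x) (by linarith) (by linarith) k
  have a2 := dl_nonneg h0 (by linarith) k
  have a3 := P_nonneg (e3_nonneg (x := x) (by linarith)) k
  have a4 := P_nonneg (u := b x * P (fm x)) (fun j => mul_nonneg (b_nonneg (by linarith) j) (P_nonneg (fm_nonneg h0 h1) j)) k
  simp only [tt, Pi.add_apply, Pi.mul_apply, Pi.ofNat_apply] at *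
  positivity

lemma Htt {x : ℝ} (h0 : 0 < x) (h1 : x < 1/2) : HasSum (tt x)
    (∑' m, X x m * P (b x) (m+1) - 1/2 * (∑' k, dl x k * b 0 k ^ 1)^2 +
     (1/2 * (∑' k, dl x k * b 0 k ^ 1)^2 - 1/2 * ∑' k, (dl x k * b 0 k ^ 1)^2)) := by
  have h1' : x < 1 := by linarith
  refine (hasSum_iff_tendsto_nat_of_nonneg (tt_nonneg h0.le h1) _).2 ?_
  have hg := Hg h0.le h1'
  have hgn : Summable (fun k => ‖g x k‖) := hg.summable.norm
  have hgg : HasSum (fun N => ∑ p ∈ antidiagonal N, g x p.1 * g x p.2) ((∑' k, dl x k * b 0 k ^ 1)^2) := by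
    rw [← hg.tsum_eq, sq, tsum_mul_tsum_eq_tsum_sum_antidiagonal_of_summable_norm hgn hgn]
    exact (summable_norm_sum_mul_antidiagonal_of_summable_norm hgn hgn).of_norm.hasSum
  have := ((lim_XB h0 h1').sub (hgg.tendsto_sum_nat.const_mul (1/2))).add (Hbg h0.le h1').tendsto_sum_nat
  refine this.congr fun K => ?_
  rw [sum_congr rfl (fun N _ => shuffle x h0 h1 N), sum_add_distrib, sum_sub_distrib, sum_sub_distrib,
    conv_sum (b x) (X x), abel_sum, ← mul_sum]
  simp only [Pi.mul_apply]
  rw [show ∑ m ∈ range K, X x m * (P (b x) (K - m) + P (b x) (m + 1) - P (b x) K) =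
    ∑ m ∈ range K, X x m * P (b x) (K - m) - ∑ m ∈ range K, X x m * (P (b x) K - P (b x) (m + 1)) by
      rw [← sum_sub_distrib]; apply sum_congr rfl; intro m _; ring]
  ring

lemma Htt' {x : ℝ} (h0 : 0 < x) (h1 : x < 1/2) : HasSum (tt x)
    (∑' k, (7/2 * (dl x k * b 0 k ^ 3) + 1/2 * (b 0 k ^ 2 * b x k * dl x k))) ∧
    Summable (fun k => (7/2 * (dl x k * b 0 k ^ 3) + 1/2 * (b 0 k ^ 2 * b x k * dl x k))) := by
  have h1' : x < 1 := by linarith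
  have s1 := (summable_dla h0.le h1' 2).hasSum
  have s2 := (summable_ab h0.le h1' 0 2).hasSum
  have s3 := (summable_dla h0.le h1' 1).hasSum
  have s4 : Summable (fun k => (dl x k * b 0 k ^ 1)^2) := by
    refine Summable.of_nonneg_of_le (fun k => sq_nonneg _) (fun k => ?_) (summable_ab h0.le h1' 0 2)
    have := dl_le_b (x := x) k
    have := dl_nonneg h0.le h1' k
    have := b_nonneg zero_lt_one k
    rw [mul_pow]; simp only [pow_one, zero_add]
    gcongr
  have T := (((s1.mul_left 3).add s2).sub (s3.mul_left (1/x))).sub (s4.hasSum.mul_left (1/2))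
  have e : ∀ k, (7/2 * (dl x k * b 0 k ^ 3) + 1/2 * (b 0 k ^ 2 * b x k * dl x k)) =
      3 * (dl x k * b 0 k ^ (2+1)) + b x k ^ (0+2) * b 0 k ^ 2 - 1/x * (dl x k * b 0 k ^ (1+1))
        - 1/2 * (dl x k * b 0 k ^ 1)^2 := by
    intro k
    have hx : 1 / x * dl x k = b 0 k * b x k := by rw [dl_eq h1' k]; field_simp
    rw [← mul_assoc (1/x), hx]
    unfold dl; ring
  have T' := T.congr_fun e
  refine ⟨?_, T'.summable⟩
  rw [T'.tsum_eq]
  convert Htt h0 h1 using 1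
  rw [(HXB h0 h1').tsum_eq]
  simp only [zero_add, Nat.reduceAdd]
  ring

end WS
namespace WS
open Finset Filter Topology
open scoped ENNReal

abbrev TT (d : ℕ) : Type := {k : Fin d → ℕ // StrictAnti k ∧ ∀ i, 0 < k i}

noncomputable def M (f0 f1 f2 f3 : ℕ → ℝ≥0∞) : ℝ≥0∞ :=
  ∑' k : TT 4, f0 (k.1 0) * f1 (k.1 1) * f2 (k.1 2) * f3 (k.1 3)

lemma M0 {f0 : ℕ → ℕ → ℝ≥0∞} {f1 f2 f3 : ℕ → ℝ≥0∞} :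
    ∑' a, M (f0 a) f1 f2 f3 = M (fun k => ∑' a, f0 a k) f1 f2 f3 := by
  unfold M
  rw [ENNReal.tsum_comm]
  simp only [ENNReal.tsum_mul_right]
lemma M1 {f1 : ℕ → ℕ → ℝ≥0∞} {f0 f2 f3 : ℕ → ℝ≥0∞} :
    ∑' a, M f0 (f1 a) f2 f3 = M f0 (fun k => ∑' a, f1 a k) f2 f3 := by
  unfold M
  rw [ENNReal.tsum_comm]
  simp only [ENNReal.tsum_mul_right, ENNReal.tsum_mul_left]
lemma M2 {f2 : ℕ → ℕ → ℝ≥0∞} {f0 f1 f3 : ℕ → ℝ≥0∞} :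
    ∑' a, M f0 f1 (f2 a) f3 = M f0 f1 (fun k => ∑' a, f2 a k) f3 := by
  unfold M
  rw [ENNReal.tsum_comm]
  simp only [ENNReal.tsum_mul_right, ENNReal.tsum_mul_left]
lemma M3 {f3 : ℕ → ℕ → ℝ≥0∞} {f0 f1 f2 : ℕ → ℝ≥0∞} :
    ∑' a, M f0 f1 f2 (f3 a) = M f0 f1 f2 (fun k => ∑' a, f3 a k) := by
  unfold M
  rw [ENNReal.tsum_comm]
  simp only [ENNReal.tsum_mul_left]

def eqv4 : ℕ × ℕ × ℕ × ℕ ≃ (Fin 4 → ℕ) where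
  toFun p := ![p.1, p.2.1, p.2.2.1, p.2.2.2]
  invFun k := (k 0, k 1, k 2, k 3)
  left_inv p := rfl
  right_inv k := by ext i; fin_cases i <;> rfl

lemma tsum_if_lt (f : ℕ → ℝ≥0∞) (n : ℕ) : ∑' k, (if k < n then f k else 0) = ∑ k ∈ range n, f k := by
  rw [tsum_eq_sum (s := range n)]
  · apply sum_congr rfl
    intro k hk; rw [if_pos (mem_range.1 hk)]
  · intro k hk; rw [if_neg (fun h => hk (mem_range.2 h))]

lemma sa4 (k0 k1 k2 k3 : ℕ) : (StrictAnti ![k0,k1,k2,k3] ∧ ∀ i, 0 < (![k0,k1,k2,k3] : Fin 4 → ℕ) i) ↔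
    k1 < k0 ∧ k2 < k1 ∧ k3 < k2 ∧ 0 < k3 := by
  rw [Fin.strictAnti_iff_succ_lt]
  simp [Fin.forall_fin_succ]
  omega

lemma tsum_pair {α β : Type} (f : α × β → ℝ≥0∞) : ∑' p, f p = ∑' a, ∑' b, f (a, b) :=
  ENNReal.tsum_prod (f := fun a b => f (a, b))

lemma M_eq {f0 f1 f2 f3 : ℕ → ℝ≥0∞} (h3 : f3 0 = 0) :
    M f0 f1 f2 f3 = ∑' k0, f0 k0 * ∑ k1 ∈ range k0, f1 k1 * ∑ k2 ∈ range k1, f2 k2 * ∑ k3 ∈ range k2, f3 k3 := by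
  unfold M
  refine (tsum_subtype {k : Fin 4 → ℕ | StrictAnti k ∧ ∀ i, 0 < k i}
    (fun k => f0 (k 0) * f1 (k 1) * f2 (k 2) * f3 (k 3))).trans ?_
  rw [← eqv4.tsum_eq, tsum_pair]
  refine tsum_congr fun k0 => ?_
  rw [← tsum_if_lt, tsum_pair, ← ENNReal.tsum_mul_left]
  refine tsum_congr fun k1 => ?_
  rw [← tsum_if_lt, tsum_pair]
  split_ifs with h1
  swap
  · rw [mul_zero, ENNReal.tsum_eq_zero]; intro k2
    rw [ENNReal.tsum_eq_zero]; intro k3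
    apply Set.indicator_of_notMem
    intro h
    exact h1 ((sa4 _ _ _ _).1 h).1
  rw [← ENNReal.tsum_mul_left, ← ENNReal.tsum_mul_left]
  refine tsum_congr fun k2 => ?_
  rw [← tsum_if_lt]
  split_ifs with h2
  swap
  · rw [mul_zero, mul_zero, ENNReal.tsum_eq_zero]; intro k3
    apply Set.indicator_of_notMem
    intro h
    exact h2 ((sa4 _ _ _ _).1 h).2.1
  rw [← ENNReal.tsum_mul_left, ← ENNReal.tsum_mul_left, ← ENNReal.tsum_mul_left]
  refine tsum_congr fun k3 => ?_
  by_cases h : k3 < k2 ∧ 0 < k3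
  · rw [Set.indicator_of_mem, if_pos h.1]
    · change f0 k0 * f1 k1 * f2 k2 * f3 k3 = _
      ring
    · exact (sa4 _ _ _ _).2 ⟨h1, h2, h⟩
  · rw [Set.indicator_of_notMem]
    · by_cases h' : k3 < k2
      · have : k3 = 0 := by omega
        simp [this, h3]
      · simp [h']
    · intro h'; exact h ((sa4 _ _ _ _).1 h').2.2

noncomputable def A (k : ℕ) : ℝ≥0∞ := ENNReal.ofReal (b 0 k)

lemma A_pow {k : ℕ} (hk : 0 < k) (s : ℕ) : ENNReal.ofReal (1 / (k:ℝ)^s) = A k ^ s := by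
  unfold A b
  rw [if_neg hk.ne', sub_zero, ← ENNReal.ofReal_pow (by positivity), one_div_pow]

lemma mzv4 (p q r t : ℕ) : mzv ![p,q,r,t] =
    (M (fun k => A k ^ p) (fun k => A k ^ q) (fun k => A k ^ r) (fun k => A k ^ t)).toReal := by
  unfold mzv M
  have : ∀ k : TT 4, ENNReal.ofReal (∏ i, (1 : ℝ) / (k.1 i : ℝ) ^ (![p,q,r,t] : Fin 4 → ℕ) i) =
     A (k.1 0) ^ p * A (k.1 1) ^ q * A (k.1 2) ^ r * A (k.1 3) ^ t := by
    intro k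
    rw [ENNReal.ofReal_prod_of_nonneg (fun i _ => by positivity)]
    simp only [A_pow (k.2.2 _)]
    rw [Fin.prod_univ_four]; rfl
  simp only [← this]
  rw [ENNReal.tsum_toReal_eq (fun _ => ENNReal.ofReal_ne_top)]
  refine tsum_congr fun k => ?_
  rw [ENNReal.toReal_ofReal]
  exact prod_nonneg fun i _ => by positivity

lemma mzv1 (w : ℕ) (hw : 0 < w) : mzv ![w] = (∑' k, A k ^ w).toReal := by
  unfold mzv
  have : ∀ k : TT 1, ENNReal.ofReal (∏ i, (1 : ℝ) / (k.1 i : ℝ) ^ (![w] : Fin 1 → ℕ) i) =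
     A (k.1 0) ^ w := by
    intro k
    rw [ENNReal.ofReal_prod_of_nonneg (fun i _ => by positivity)]
    simp only [A_pow (k.2.2 _)]
    simp
  have e : ∑' k, A k ^ w = ∑' k : TT 1, A (k.1 0) ^ w := by
    refine Eq.trans ?_ (tsum_subtype {k : Fin 1 → ℕ | StrictAnti k ∧ ∀ i, 0 < k i} (fun k => A (k 0) ^ w)).symm
    rw [← (Equiv.funUnique (Fin 1) ℕ).symm.tsum_eq]
    refine tsum_congr fun k => ?_
    by_cases hk : k = 0
    · rw [Set.indicator_of_notMem]
      · simp [hk, A, b, hw.ne']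
      · intro h; have := h.2 0; simp [hk] at this
    · rw [Set.indicator_of_mem]
      · simp
      · refine ⟨Subsingleton.strictAnti _, fun i => ?_⟩
        simpa using Nat.pos_of_ne_zero hk
  rw [e]
  simp only [← this]
  rw [ENNReal.tsum_toReal_eq (fun _ => ENNReal.ofReal_ne_top)]
  refine tsum_congr fun k => ?_
  rw [ENNReal.toReal_ofReal]
  exact prod_nonneg fun i _ => by positivity

lemma regroup (G : ℕ → ℕ → ℝ≥0∞) : ∑' a, ∑' m, G a m = ∑' n, ∑ a ∈ range (n+1), G a (n - a) := by
  rw [← ENNReal.tsum_prod, ← (Finset.HasAntidiagonal.sigmaAntidiagonalEquivProd (A := ℕ)).tsum_eq, ENNReal.tsum_sigma']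
  refine tsum_congr fun n => ?_
  rw [← Finset.Nat.sum_antidiagonal_eq_sum_range_succ G, tsum_fintype]
  exact Finset.sum_coe_sort (antidiagonal n) (fun p => G p.1 p.2)

lemma regroup4 (F : ℕ → ℕ → ℕ → ℕ → ℝ≥0∞) : ∑' a, ∑' b, ∑' c, ∑' d, F a b c d =
    ∑' n, ∑ a ∈ range (n+1), ∑ b ∈ range (n - a + 1), ∑ c ∈ range (n - a - b + 1), F a b c (n - a - b - c) := by
  rw [← regroup (fun a n => ∑ b ∈ range (n + 1), ∑ c ∈ range (n - b + 1), F a b c (n - b - c))]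
  refine tsum_congr fun a => ?_
  rw [← regroup (fun b n => ∑ c ∈ range (n + 1), F a b c (n - c))]
  refine tsum_congr fun b => ?_
  rw [← regroup]

lemma uniq_coeff {h : ℕ → ℝ} (hs : ∀ x : ℝ, 0 < x → x < 1/2 → HasSum (fun n => h n * x ^ n) 0) (n : ℕ) :
    h n = 0 := by
  induction n using Nat.strong_induction_on with
  | _ n ih =>
    have key : ∀ x : ℝ, 0 < x → x < 1/2 → HasSum (fun j => h (j + n) * x ^ j) 0 := by
      intro x h0 h1
      have h2 := (hasSum_nat_add_iff' n).2 (hs x h0 h1)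
      rw [sum_eq_zero (fun i hi => by rw [ih i (mem_range.1 hi), zero_mul]), sub_zero] at h2
      have := h2.div_const (x ^ n)
      rw [zero_div] at this
      refine this.congr_fun fun j => ?_
      rw [pow_add]; field_simp
    have hq := key (1/4) (by norm_num) (by norm_num)
    have hq' : Summable (fun j => |h (j + 1 + n)| * (1/4)^j) := by
      have := ((summable_nat_add_iff 1).2 hq.summable).abs.mul_left 4
      refine this.congr fun j => ?_
      rw [abs_mul, abs_of_nonneg (by positivity : (0:ℝ) ≤ (1/4)^(j+1)), pow_succ]; ring
    set B := ∑' j, |h (j + 1 + n)| * (1/4)^j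
    have bound : ∀ x : ℝ, 0 < x → x < 1/4 → |h n| ≤ x * B := by
      intro x h0 h1
      have h2 := (hasSum_nat_add_iff' 1).2 (key x h0 (by linarith))
      simp only [range_one, sum_singleton, zero_add, pow_zero, mul_one, zero_sub] at h2
      have h3 := (hq'.hasSum).mul_left x
      have : ‖-h n‖ ≤ x * B := by
        rw [← h2.tsum_eq]
        refine tsum_of_norm_bounded h3 fun j => ?_
        rw [norm_mul, Real.norm_eq_abs, Real.norm_of_nonneg (by positivity), pow_succ]
        have : x ^ j ≤ (1/4)^j := pow_le_pow_left₀ h0.le h1.le j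
        calc |h (j+1+n)| * (x^j * x) = x * (|h (j+1+n)| * x^j) := by ring
          _ ≤ _ := by gcongr
      simpa using this
    have lim : Tendsto (fun x : ℝ => x * B) (𝓝[>] 0) (𝓝 0) := by
      have : Tendsto (fun x : ℝ => x * B) (𝓝 0) (𝓝 (0 * B)) := tendsto_id.mul_const B
      rw [zero_mul] at this
      exact this.mono_left nhdsWithin_le_nhds
    have : |h n| ≤ 0 := by
      refine ge_of_tendsto lim ?_
      filter_upwards [Ioo_mem_nhdsGT (show (0:ℝ) < 1/4 by norm_num)] with x hx
      exact bound x hx.1 hx.2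
    exact abs_eq_zero.1 (le_antisymm this (abs_nonneg _))

end WS
namespace WS
open Finset Filter Topology
open scoped ENNReal
local notation "o" => ENNReal.ofReal

lemma A_zero : A 0 = 0 := by simp [A, b]

lemma geoB {y : ℝ} (h0 : 0 ≤ y) (h1 : y < 1) (k : ℕ) : ∑' c : ℕ, (o y) ^ c * A k ^ (c+1) = o (b y k) := by
  by_cases hk : k = 0
  · simp [hk, A_zero, b]
  · have hk1 : (1:ℝ) ≤ k := by exact_mod_cast Nat.one_le_iff_ne_zero.2 hk
    have ha : 0 ≤ b 0 k := b_nonneg zero_lt_one k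
    have ha1 := a_le_one k
    have hlt : y * b 0 k < 1 := lt_of_le_of_lt (mul_le_of_le_one_right h0 ha1) h1
    have hs := (hasSum_geometric_of_lt_one (mul_nonneg h0 ha) hlt).mul_left (b 0 k)
    have e : b 0 k * (1 - y * b 0 k)⁻¹ = b y k := by
      simp only [b, hk, if_false, sub_zero]
      have : (k:ℝ) - y ≠ 0 := by intro; linarith
      field_simp
    rw [e] at hs
    rw [← hs.tsum_eq, ENNReal.ofReal_tsum_of_nonneg (fun n => by positivity) hs.summable]
    refine tsum_congr fun c => ?_
    unfold A
    rw [← ENNReal.ofReal_pow h0, ← ENNReal.ofReal_pow ha, ← ENNReal.ofReal_mul (by positivity)]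
    congr 1; ring

lemma geoD {y : ℝ} (h0 : 0 ≤ y) (h1 : y < 1) (k : ℕ) :
    ∑' c : ℕ, (o y) ^ (c+1) * A k ^ (c+2) = o (dl y k) := by
  have ha : 0 ≤ b 0 k := b_nonneg zero_lt_one k
  rw [dl_eq h1, ENNReal.ofReal_mul (mul_nonneg h0 ha), ENNReal.ofReal_mul h0, ← geoB h0 h1, ← ENNReal.tsum_mul_left]
  refine tsum_congr fun c => ?_
  change _ = o y * A k * _
  ring

lemma geoS {y : ℝ} (h0 : 0 ≤ y) (h1 : y < 1) (k : ℕ) :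
    ∑' n : ℕ, ((n:ℝ≥0∞) + 1) * ((o y) ^ (n+1) * A k ^ (n+3)) = o (b y k) * o (dl y k) := by
  rw [← geoD h0 h1, ← geoB h0 h1, ← ENNReal.tsum_mul_right]
  simp only [← ENNReal.tsum_mul_left]
  rw [regroup]
  refine tsum_congr fun n => ?_
  rw [sum_congr rfl (g := fun _ => (o y) ^ (n+1) * A k ^ (n+3))]
  · simp
  · intro c hc
    obtain ⟨m, rfl⟩ : ∃ m, n = c + m := ⟨n - c, by have := mem_range.1 hc; omega⟩
    rw [Nat.add_sub_cancel_left]; ring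

lemma rhs_k {y : ℝ} (h0 : 0 ≤ y) (h1 : y < 1) (k : ℕ) :
    o (7/2 * (dl y k * b 0 k ^ 3) + 1/2 * (b 0 k ^ 2 * b y k * dl y k)) =
    ∑' n : ℕ, (o y) ^ (n+1) * (o (((n:ℝ) + 8)/2) * A k ^ (n+5)) := by
  have ha : 0 ≤ b 0 k := b_nonneg zero_lt_one k
  have hb := b_nonneg h1 k
  have hd := dl_nonneg h0 h1 k
  rw [ENNReal.ofReal_add (by positivity) (by positivity), ENNReal.ofReal_mul (p := 7/2) (by norm_num),
    ENNReal.ofReal_mul (p := 1/2) (by norm_num), ENNReal.ofReal_mul hd, ENNReal.ofReal_mul (by positivity),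
    ENNReal.ofReal_mul (by positivity), mul_assoc (o (b 0 k ^ 2)), ← geoS h0 h1, ← geoD h0 h1,
    ENNReal.ofReal_pow ha, ENNReal.ofReal_pow ha, ← ENNReal.tsum_mul_right, ← ENNReal.tsum_mul_left,
    ← ENNReal.tsum_mul_left, ← ENNReal.tsum_mul_left, ← ENNReal.tsum_add]
  refine tsum_congr fun n => ?_
  have e : o (((n:ℝ) + 8)/2) = o (7/2) + o (1/2) * ((n:ℝ≥0∞) + 1) := by
    rw [show ((n:ℝ) + 8)/2 = 7/2 + 1/2 * ((n:ℝ) + 1) by ring, ENNReal.ofReal_add (by norm_num) (by positivity),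
      ENNReal.ofReal_mul (by norm_num), ENNReal.ofReal_add (by positivity) (by norm_num), ENNReal.ofReal_natCast,
      ENNReal.ofReal_one]
  rw [e]
  change o (7/2) * (_ * A k ^ 3) + o (1/2) * (A k ^ 2 * _) = _
  ring

noncomputable def LE (n : ℕ) : ℝ≥0∞ :=
  ∑ a ∈ range (n+1), ∑ b ∈ range (n - a + 1), ∑ c ∈ range (n - a - b + 1),
    (2 ^ (a+1) + 2 ^ (c+1)) * M (fun k => A k ^ (a+2)) (fun k => A k ^ (b+1)) (fun k => A k ^ (c+1))
      (fun k => A k ^ (n - a - b - c + 1))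

noncomputable def RE (n : ℕ) : ℝ≥0∞ := o (((n:ℝ) + 8)/2) * ∑' k, A k ^ (n+5)

lemma oP' {w : ℕ → ℝ} (hw : ∀ k, 0 ≤ w k) (k : ℕ) : o (P w k) = ∑ j ∈ range k, o (w j) := by
  unfold P; rw [ENNReal.ofReal_sum_of_nonneg (fun i _ => hw i)]

lemma M_real {u0 u1 u2 u3 : ℕ → ℝ} (h0 : ∀ k, 0 ≤ u0 k) (h1 : ∀ k, 0 ≤ u1 k) (h2 : ∀ k, 0 ≤ u2 k)
    (h3 : ∀ k, 0 ≤ u3 k) (hz : u3 0 = 0) :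
    M (fun k => o (u0 k)) (fun k => o (u1 k)) (fun k => o (u2 k)) (fun k => o (u3 k)) =
      ∑' k, o ((u0 * P (u1 * P (u2 * P u3))) k) := by
  have g2 : ∀ k, 0 ≤ (u2 * P u3) k := fun k => mul_nonneg (h2 k) (P_nonneg h3 k)
  have g1 : ∀ k, 0 ≤ (u1 * P (u2 * P u3)) k := fun k => mul_nonneg (h1 k) (P_nonneg g2 k)
  rw [M_eq (by simp [hz])]
  refine tsum_congr fun k => ?_
  rw [Pi.mul_apply, ENNReal.ofReal_mul (h0 k), oP' g1]
  congr 1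
  refine sum_congr rfl fun j _ => ?_
  rw [Pi.mul_apply, ENNReal.ofReal_mul (h1 j), oP' g2]
  congr 1
  refine sum_congr rfl fun i _ => ?_
  rw [Pi.mul_apply, ENNReal.ofReal_mul (h2 i), oP' h3]

lemma M_pull (u0 u1 u2 u3 : ℝ≥0∞) (f0 f1 f2 f3 : ℕ → ℝ≥0∞) :
    M (fun k => u0 * f0 k) (fun k => u1 * f1 k) (fun k => u2 * f2 k) (fun k => u3 * f3 k) =
      (u0 * u1 * u2 * u3) * M f0 f1 f2 f3 := by
  unfold M
  rw [← ENNReal.tsum_mul_left]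
  refine tsum_congr fun k => ?_
  ring

lemma lhs_gen {x : ℝ} (h0 : 0 < x) (h1 : x < 1/2) :
    ∑' n, (o x) ^ (n+1) * LE n = ∑' k, o (tt x k) := by
  have hx1 : x < 1 := by linarith
  have h20 : 0 ≤ 2 * x := by linarith
  have h21 : 2 * x < 1 := by linarith
  have e2 : o (2 * x) = 2 * o x := by rw [ENNReal.ofReal_mul (by norm_num)]; simp
  let F : ℕ → ℕ → ℕ → ℕ → ℝ≥0∞ := fun a b c d =>
    M (fun k => (o (2*x))^(a+1) * A k ^ (a+2)) (fun k => (o x)^b * A k ^ (b+1))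
      (fun k => (o x)^c * A k ^ (c+1)) (fun k => (o x)^d * A k ^ (d+1)) +
    2 * M (fun k => (o x)^(a+1) * A k ^ (a+2)) (fun k => (o x)^b * A k ^ (b+1))
      (fun k => (o (2*x))^c * A k ^ (c+1)) (fun k => (o x)^d * A k ^ (d+1))
  have h : ∑' n, (o x) ^ (n+1) * LE n = ∑' a, ∑' b, ∑' c, ∑' d, F a b c d := by
    rw [regroup4]
    refine tsum_congr fun n => ?_
    unfold LE
    simp only [mul_sum]
    refine sum_congr rfl fun a ha => sum_congr rfl fun b hb => sum_congr rfl fun c hc => ?_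
    have ha := mem_range.1 ha
    have hb := mem_range.1 hb
    have hc := mem_range.1 hc
    obtain ⟨d, rfl⟩ : ∃ d, n = a + b + c + d := ⟨n - a - b - c, by omega⟩
    rw [show a + b + c + d - a - b - c = d by omega]
    simp only [F, M_pull, e2]
    ring
  rw [h]
  simp only [F, ENNReal.tsum_add, ENNReal.tsum_mul_left]
  simp only [M3, M2, M1, M0]
  simp only [geoB h0.le hx1, geoB h20 h21, geoD h0.le hx1, geoD h20 h21]
  have hb := b_nonneg hx1
  rw [M_real (dl_nonneg h20 h21) hb hb hb (b_zero _),
    M_real (dl_nonneg h0.le hx1) hb (b_nonneg h21) hb (b_zero _), ← ENNReal.tsum_mul_left, ← ENNReal.tsum_add]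
  refine tsum_congr fun k => ?_
  have a1 := dl_nonneg h20 h21 k
  have a2 := dl_nonneg h0.le hx1 k
  have a3 := P_nonneg (e3_nonneg hx1) k
  have a4 := P_nonneg (u := b x * P (fm x)) (fun j => mul_nonneg (hb j) (P_nonneg (fm_nonneg h0.le h1) j)) k
  change o (dl (2*x) k * P (e3 x) k) + 2 * o (dl x k * P (b x * P (fm x)) k) =
    o (dl (2*x) k * P (e3 x) k + 2 * (dl x k * P (b x * P (fm x)) k))
  rw [ENNReal.ofReal_add (by positivity) (by positivity), ENNReal.ofReal_mul (p := 2) (by norm_num)]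
  simp

lemma gen_eq {x : ℝ} (h0 : 0 < x) (h1 : x < 1/2) :
    ∑' n, (o x) ^ (n+1) * LE n = ∑' n, (o x) ^ (n+1) * RE n ∧ ∑' n, (o x) ^ (n+1) * LE n ≠ ⊤ := by
  have hx1 : x < 1 := by linarith
  obtain ⟨H, S⟩ := Htt' h0 h1
  have e : ∑' n, (o x) ^ (n+1) * LE n =
      o (∑' k, (7/2 * (dl x k * b 0 k ^ 3) + 1/2 * (b 0 k ^ 2 * b x k * dl x k))) := by
    rw [lhs_gen h0 h1, ← H.tsum_eq, ENNReal.ofReal_tsum_of_nonneg (tt_nonneg h0.le h1) H.summable]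
  refine ⟨?_, by rw [e]; exact ENNReal.ofReal_ne_top⟩
  rw [e, ENNReal.ofReal_tsum_of_nonneg _ S]
  · simp only [rhs_k h0.le hx1]
    rw [ENNReal.tsum_comm]
    simp only [ENNReal.tsum_mul_left]
    rfl
  · intro k
    have ha : 0 ≤ b 0 k := b_nonneg zero_lt_one k
    have hb := b_nonneg hx1 k
    have hd := dl_nonneg h0.le hx1 k
    positivity

lemma ne_top_aux {G : ℕ → ℝ≥0∞} {x : ℝ} (h0 : 0 < x) (h : ∑' n, (o x) ^ (n+1) * G n ≠ ⊤) (n : ℕ) : G n ≠ ⊤ := by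
  intro hn
  have := ENNReal.ne_top_of_tsum_ne_top h n
  rw [hn, ENNReal.mul_top] at this
  · exact this rfl
  · have : 0 < o x := ENNReal.ofReal_pos.2 h0
    positivity

lemma hasSum_aux {G : ℕ → ℝ≥0∞} {x : ℝ} (h0 : 0 < x) (h : ∑' n, (o x) ^ (n+1) * G n ≠ ⊤) :
    HasSum (fun n => (G n).toReal * x ^ n) ((∑' n, (o x) ^ (n+1) * G n).toReal / x) := by
  have := (ENNReal.hasSum_toReal h).div_const x
  rw [← ENNReal.tsum_toReal_eq (ENNReal.ne_top_of_tsum_ne_top h)] at this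
  refine this.congr_fun fun n => ?_
  rw [ENNReal.toReal_mul, ENNReal.toReal_pow, ENNReal.toReal_ofReal h0.le]
  field_simp
  ring

lemma LE_eq_RE (n : ℕ) : (LE n).toReal = (RE n).toReal := by
  have := uniq_coeff (h := fun n => (LE n).toReal - (RE n).toReal) ?_ n
  · linarith
  · intro x h0 h1
    obtain ⟨e, t⟩ := gen_eq h0 h1
    have h2 := hasSum_aux h0 t
    rw [e] at t
    have := h2.sub (hasSum_aux h0 t)
    rw [e, sub_self] at this
    refine this.congr_fun fun n => ?_
    ring

lemma LE_ne_top (n : ℕ) : LE n ≠ ⊤ := by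
  obtain ⟨_, t⟩ := gen_eq (x := 1/4) (by norm_num) (by norm_num)
  exact ne_top_aux (by norm_num) t n

lemma LE_real (n : ℕ) : (LE n).toReal = ∑ a ∈ range (n+1), ∑ b ∈ range (n - a + 1), ∑ c ∈ range (n - a - b + 1),
    ((2:ℝ) ^ (a+1) + 2 ^ (c+1)) * mzv ![a+2, b+1, c+1, n - a - b - c + 1] := by
  have h := LE_ne_top n
  unfold LE at h ⊢
  have h1 := ENNReal.sum_ne_top.1 h
  rw [ENNReal.toReal_sum h1]
  refine sum_congr rfl fun a ha => ?_
  have h2 := ENNReal.sum_ne_top.1 (h1 a ha)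
  rw [ENNReal.toReal_sum h2]
  refine sum_congr rfl fun b hb => ?_
  have h3 := ENNReal.sum_ne_top.1 (h2 b hb)
  rw [ENNReal.toReal_sum h3]
  refine sum_congr rfl fun c hc => ?_
  rw [ENNReal.toReal_mul, mzv4, ENNReal.toReal_add (by finiteness) (by finiteness)]
  simp

lemma RE_real (n : ℕ) : (RE n).toReal = ((n:ℝ) + 8)/2 * mzv ![n+5] := by
  unfold RE
  rw [ENNReal.toReal_mul, mzv1 _ (by omega), ENNReal.toReal_ofReal (by positivity)]

lemma sum_Icc_shift (f : ℕ → ℝ) (s m : ℕ) : ∑ i ∈ Icc s (m + s), f i = ∑ i ∈ range (m+1), f (i + s) := by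
  rw [range_eq_Ico, sum_Ico_add' f 0 (m+1) s]
  congr 1
  ext i; simp; omega


end WS

theorem weighted_sum_depth4_2a1_plus_2c (w : ℕ) (hw : 5 ≤ w) :
    (∑ a ∈ Finset.Icc 2 (w - 3), ∑ b ∈ Finset.Icc 1 (w - a - 2),
      ∑ c ∈ Finset.Icc 1 (w - a - b - 1),
        ((2 : ℝ) ^ (a - 1) + (2 : ℝ) ^ c) * mzv ![a, b, c, w - a - b - c])
    = (((w : ℝ) + 3) / 2) * mzv ![w] := by
  obtain ⟨n, rfl⟩ : ∃ n, w = n + 5 := ⟨w - 5, by omega⟩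
  have h := WS.LE_eq_RE n
  rw [WS.LE_real, WS.RE_real] at h
  rw [show ((n + 5 : ℕ) : ℝ) + 3 = (n : ℝ) + 8 by push_cast; ring, ← h,
    show n + 5 - 3 = n + 2 by omega, WS.sum_Icc_shift]
  refine Finset.sum_congr rfl fun a ha => ?_
  have ha := Finset.mem_range.1 ha
  rw [show n + 5 - (a + 2) - 2 = (n - a) + 1 by omega, WS.sum_Icc_shift]
  refine Finset.sum_congr rfl fun b hb => ?_
  have hb := Finset.mem_range.1 hb
  rw [show n + 5 - (a + 2) - (b + 1) - 1 = (n - a - b) + 1 by omega, WS.sum_Icc_shift]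
  refine Finset.sum_congr rfl fun c hc => ?_
  have hc := Finset.mem_range.1 hc
  rw [show n + 5 - (a + 2) - (b + 1) - (c + 1) = n - a - b - c + 1 by omega,
    show a + 2 - 1 = a + 1 by omega]
end

section
/- Let w ≥ 5 be an integer and q = w−3, u = w−2. Then Σ_{a+b+c+d=w, a≥2, b,c,d≥1} 2^c·ζ(a,b,c,d) = ((w−1)/2)·ζ(w) + (q/2)·ζ(u,2) − ζ(3,q). -/
section Helpers
open Finset


/-- harmonic sums `H_n^{(j)}`. -/
noncomputable def Hs (j n : ℕ) : ℝ := ∑ i ∈ range n, 1 / ((i : ℝ) + 1) ^ j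

lemma Hs_succ (j n : ℕ) : Hs j (n+1) = Hs j n + 1 / ((n:ℝ)+1)^j := by
  simp [Hs, sum_range_succ]
lemma Hs_zero (j : ℕ) : Hs j 0 = 0 := by simp [Hs]

/-- shifted inner sum -/
lemma inner_shift (j n i : ℕ) :
    ∑ l ∈ range (i+1), 1 / (((n+1:ℕ):ℝ) + l + 1)^j
      = ∑ l ∈ range (i+1), 1 / ((n:ℝ) + l + 1)^j + 1 / ((n:ℝ)+i+2)^j - 1/((n:ℝ)+1)^j := by
  have h1 := sum_range_succ (fun l : ℕ => 1 / ((n:ℝ) + l + 1)^j) (i+1)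
  have h2 := sum_range_succ' (fun l : ℕ => 1 / ((n:ℝ) + l + 1)^j) (i+1)
  have h3 : ∑ l ∈ range (i+1), 1 / (((n+1:ℕ):ℝ) + l + 1)^j
      = ∑ l ∈ range (i+1), 1 / ((n:ℝ) + ((l+1:ℕ):ℝ) + 1)^j := by
    refine sum_congr rfl fun l _ => ?_
    push_cast; ring_nf
  rw [h3]
  have h4 : ((n:ℝ) + ((i+1:ℕ):ℝ) + 1) = (n:ℝ)+i+2 := by push_cast; ring
  rw [h1, h4] at h2
  simp only [Nat.cast_zero, add_zero] at h2
  linarith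

lemma finB (n : ℕ) : ∑ i ∈ range n, (1/((i:ℝ)+1)) * ∑ l ∈ range (i+1), 1 / ((n:ℝ) + l + 1)^1
    = Hs 2 n / 2 := by
  induction n with
  | zero => simp [Hs]
  | succ n ih =>
    rw [sum_range_succ]
    simp only [inner_shift]
    rw [Hs_succ, add_div, ← ih, sum_range_succ, add_assoc, sub_eq_add_neg]
    have : ∀ i ∈ range n, (1/((i:ℝ)+1)) * (∑ l ∈ range (i+1), 1 / ((n:ℝ) + l + 1)^1 + 1 / ((n:ℝ)+i+2)^1 - 1/((n:ℝ)+1)^1)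
       = (1/((i:ℝ)+1)) * ∑ l ∈ range (i+1), 1 / ((n:ℝ) + l + 1)^1 - (1/((n:ℝ)+1)) * (1/((n:ℝ)+((i+1:ℕ):ℝ)+1)^1) := by
      intro i _
      push_cast
      field_simp
      ring
    rw [sum_congr rfl this, sum_sub_distrib, ← mul_sum]
    have h2 := sum_range_succ' (fun l : ℕ => 1 / ((n:ℝ) + l + 1)^1) n
    rw [sum_range_succ] at h2
    have h3 : ∑ l ∈ range n, 1 / ((n:ℝ) + ((l+1:ℕ):ℝ) + 1)^1 = ∑ l ∈ range n, 1 / ((n:ℝ) + l + 1)^1 + 1 / ((n:ℝ) + n + 1)^1 - 1 / ((n:ℝ)+1)^1 := by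
      simp only [Nat.cast_zero, add_zero] at h2
      linarith
    rw [h3]
    field_simp
    ring

lemma finF (n : ℕ) : 2 * ∑ i ∈ range n, (1/((i:ℝ)+1)) * ∑ l ∈ range (i+1), 1 / ((n:ℝ) + l + 1)^2
    + ∑ i ∈ range n, (1/((i:ℝ)+1)^2) * ∑ l ∈ range (i+1), 1 / ((n:ℝ) + l + 1)^1
    = Hs 3 n - ∑ m ∈ range n, Hs 1 m / ((m:ℝ)+1)^2 := by
  induction n with
  | zero => simp [Hs]
  | succ n ih =>
    rw [sum_range_succ, sum_range_succ (fun i:ℕ => (1/((i:ℝ)+1)^2) * ∑ l ∈ range (i+1), 1 / (((n+1:ℕ):ℝ) + l + 1)^1), sum_range_succ (fun m : ℕ => Hs 1 m / ((m:ℝ)+1)^2)]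
    simp only [inner_shift]
    have e1 : ∀ i ∈ range n, (1/((i:ℝ)+1)) * (∑ l ∈ range (i+1), 1 / ((n:ℝ) + l + 1)^2 + 1 / ((n:ℝ)+i+2)^2 - 1/((n:ℝ)+1)^2)
       = (1/((i:ℝ)+1)) * ∑ l ∈ range (i+1), 1 / ((n:ℝ) + l + 1)^2 - (1/((n:ℝ)+1)^2) * (1/((n:ℝ)+((i+1:ℕ):ℝ)+1)^1)
         - (1/((n:ℝ)+1)) * (1/((n:ℝ)+((i+1:ℕ):ℝ)+1)^2) := by
      intro i _
      push_cast
      field_simp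
      ring
    have e2 : ∀ i ∈ range n, (1/((i:ℝ)+1)^2) * (∑ l ∈ range (i+1), 1 / ((n:ℝ) + l + 1)^1 + 1 / ((n:ℝ)+i+2)^1 - 1/((n:ℝ)+1)^1)
       = (1/((i:ℝ)+1)^2) * ∑ l ∈ range (i+1), 1 / ((n:ℝ) + l + 1)^1 
         - (1/((n:ℝ)+1)^2) * (1/((i:ℝ)+1)^1) + (1/((n:ℝ)+1)^2) * (1/((n:ℝ)+((i+1:ℕ):ℝ)+1)^1) := by
      intro i _
      push_cast
      field_simp
      ring
    rw [sum_congr rfl e1, sum_congr rfl e2, sum_sub_distrib, sum_sub_distrib, sum_add_distrib, sum_sub_distrib, ← mul_sum, ← mul_sum, ← mul_sum]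
    have h3 : ∀ j : ℕ, ∑ l ∈ range n, 1 / ((n:ℝ) + ((l+1:ℕ):ℝ) + 1)^j = ∑ l ∈ range n, 1 / ((n:ℝ) + l + 1)^j + 1 / ((n:ℝ) + n + 1)^j - 1 / ((n:ℝ)+1)^j := by
      intro j
      have h2 := sum_range_succ' (fun l : ℕ => 1 / ((n:ℝ) + l + 1)^j) n
      rw [sum_range_succ] at h2
      simp only [Nat.cast_zero, add_zero] at h2
      linarith
    rw [h3, h3, sum_range_succ (fun l : ℕ => 1 / ((n:ℝ) + l + 1)^2), sum_range_succ (fun l : ℕ => 1 / ((n:ℝ) + l + 1)^1), Hs_succ]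
    have hH : ∑ i ∈ range n, 1/((i:ℝ)+1)^1 = Hs 1 n := rfl
    rw [hH]
    generalize ∑ l ∈ range n, 1 / ((n:ℝ) + l + 1)^1 = u at *
    generalize ∑ l ∈ range n, 1 / ((n:ℝ) + l + 1)^2 = v at *
    generalize ∑ m ∈ range n, Hs 1 m / ((m:ℝ)+1)^2 = z at *
    have hz : z = Hs 3 n - (2 * ∑ i ∈ range n, (1/((i:ℝ)+1)) * ∑ l ∈ range (i+1), 1 / ((n:ℝ) + l + 1)^2
    + ∑ i ∈ range n, (1/((i:ℝ)+1)^2) * ∑ l ∈ range (i+1), 1 / ((n:ℝ) + l + 1)^1) := by linarith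
    rw [hz]
    generalize ∑ i ∈ range n, (1/((i:ℝ)+1)) * ∑ l ∈ range (i+1), 1 / ((n:ℝ) + l + 1)^2 = z1 at *
    generalize ∑ i ∈ range n, (1/((i:ℝ)+1)^2) * ∑ l ∈ range (i+1), 1 / ((n:ℝ) + l + 1)^1 = z2 at *
    field_simp
    ring


lemma mzv_one (a : ℕ) : mzv ![a] = ∑' x : ℕ, 1 / ((x:ℝ)+1)^a := by
  have hb : Function.Bijective (fun x : ℕ =>
      (⟨![x+1], by rw [Fin.strictAnti_iff_succ_lt]; intro i; exact i.elim0, by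
        intro i; fin_cases i; simp⟩ : {k : Fin 1 → ℕ // StrictAnti k ∧ ∀ i, 0 < k i})) := by
    constructor
    · intro x y h
      have h0 := congrFun (congrArg Subtype.val h) 0
      simpa using h0
    · rintro ⟨k, hk, hp⟩
      refine ⟨k 0 - 1, Subtype.ext (funext fun i => ?_)⟩
      have := hp 0
      fin_cases i
      simp; omega
  rw [mzv, ← (Equiv.ofBijective _ hb).tsum_eq]
  refine tsum_congr fun x => ?_
  simp

lemma mzv_two (a b : ℕ) : mzv ![a, b] = ∑' x : ℕ × ℕ,
    1 / ((x.1:ℝ)+x.2+2)^a * (1 / ((x.1:ℝ)+1)^b) := by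
  have hb : Function.Bijective (fun x : ℕ × ℕ =>
      (⟨![x.1+x.2+2, x.1+1], by
        rw [Fin.strictAnti_iff_succ_lt]; intro i; fin_cases i; simp, by
        intro i; fin_cases i <;> simp⟩ : {k : Fin 2 → ℕ // StrictAnti k ∧ ∀ i, 0 < k i})) := by
    constructor
    · rintro ⟨x1, x2⟩ ⟨y1, y2⟩ h
      have h0 := congrFun (congrArg Subtype.val h) 0
      have h1 := congrFun (congrArg Subtype.val h) 1
      simp at h0 h1
      ext <;> simp <;> omega
    · rintro ⟨k, hk, hp⟩
      refine ⟨(k 1 - 1, k 0 - k 1 - 1), Subtype.ext (funext fun i => ?_)⟩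
      have := hp 1
      have h1 : k 1 < k 0 := hk (by decide)
      fin_cases i <;> simp <;> omega
  rw [mzv, ← (Equiv.ofBijective _ hb).tsum_eq]
  refine tsum_congr fun x => ?_
  simp [Fin.prod_univ_two]
  ring

lemma mzv_four (a b c d : ℕ) : mzv ![a, b, c, d] = ∑' t : ℕ × ℕ × ℕ × ℕ,
    (1 / ((t.1:ℝ)+t.2.1+t.2.2.1+t.2.2.2+4))^a * (1 / ((t.1:ℝ)+t.2.1+t.2.2.1+3))^b *
    (1 / ((t.1:ℝ)+t.2.1+2))^c * (1/((t.1:ℝ)+1))^d := by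
  have hb : Function.Bijective (fun t : ℕ × ℕ × ℕ × ℕ =>
      (⟨![t.1+t.2.1+t.2.2.1+t.2.2.2+4, t.1+t.2.1+t.2.2.1+3, t.1+t.2.1+2, t.1+1], by
        rw [Fin.strictAnti_iff_succ_lt]; intro i; fin_cases i <;> simp <;> omega, by
        intro i; fin_cases i <;> simp⟩ : {k : Fin 4 → ℕ // StrictAnti k ∧ ∀ i, 0 < k i})) := by
    constructor
    · rintro ⟨x1, x2, x3, x4⟩ ⟨y1, y2, y3, y4⟩ h
      have h0 := congrFun (congrArg Subtype.val h) 0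
      have h1 := congrFun (congrArg Subtype.val h) 1
      have h2 := congrFun (congrArg Subtype.val h) 2
      have h3 := congrFun (congrArg Subtype.val h) 3
      simp at h0 h1 h2 h3
      simp only [Prod.mk.injEq]
      omega
    · rintro ⟨k, hk, hp⟩
      refine ⟨(k 3 - 1, k 2 - k 3 - 1, k 1 - k 2 - 1, k 0 - k 1 - 1), Subtype.ext (funext fun i => ?_)⟩
      have := hp 3
      have h1 : k 1 < k 0 := hk (by decide)
      have h2 : k 2 < k 1 := hk (by decide)
      have h3 : k 3 < k 2 := hk (by decide)
      fin_cases i <;> simp <;> omega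
  rw [mzv, ← (Equiv.ofBijective _ hb).tsum_eq]
  refine tsum_congr fun x => ?_
  simp [Fin.prod_univ_four]
  ring

/-- comparison function -/
noncomputable def ph (a : ℝ) : ℝ := 1 / (a * a ^ (1/4 : ℝ))

lemma ph_nonneg {a : ℝ} (h : 0 ≤ a) : 0 ≤ ph a := by unfold ph; positivity

lemma key_bound {K a b c d : ℝ} (ha : 0 < a) (hb : 0 < b) (hc : 0 < c) (hd : 0 < d)
    (haK : a ≤ K) (hbK : b ≤ K) (hcK : c ≤ K) (hdK : d ≤ K) :
    1 / (K * (a * b * c * d)) ≤ ph a * (ph b * (ph c * ph d)) := by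
  have hK : 0 < K := ha.trans_le haK
  have h1 : a ^ (1/4:ℝ) * b ^ (1/4:ℝ) * c ^ (1/4:ℝ) * d ^ (1/4:ℝ) ≤ K := by
    calc _ ≤ K ^ (1/4:ℝ) * K ^ (1/4:ℝ) * K ^ (1/4:ℝ) * K ^ (1/4:ℝ) := by gcongr
      _ = K := by
        rw [← Real.rpow_add hK, ← Real.rpow_add hK, ← Real.rpow_add hK]; norm_num
  have e : ph a * (ph b * (ph c * ph d))
      = 1 / ((a ^ (1/4:ℝ) * b ^ (1/4:ℝ) * c ^ (1/4:ℝ) * d ^ (1/4:ℝ)) * (a*b*c*d)) := by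
    unfold ph; field_simp
  rw [e]
  gcongr

lemma summable_ph : Summable (fun x : ℕ => ph ((x:ℝ)+1)) := by
  have h := (Real.summable_one_div_nat_rpow (p := 5/4)).2 (by norm_num)
  have h2 := (summable_nat_add_iff 1).2 h
  refine h2.congr fun x => ?_
  have : (0:ℝ) < (x:ℝ)+1 := by positivity
  unfold ph
  push_cast
  rw [show (5/4:ℝ) = 1 + 1/4 by norm_num, Real.rpow_add this, Real.rpow_one]

lemma summable_ph_int : Summable (fun x : ℤ => ph |(x:ℝ)|) := by
  have h : Summable (fun n : ℕ => ph (n:ℝ)) := by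
    rw [← summable_nat_add_iff 1]
    refine summable_ph.congr fun x => ?_
    push_cast; rfl
  refine Summable.of_nat_of_neg ?_ ?_ <;> simpa using h

lemma summable_ph4 : Summable (fun t : ℕ × ℕ × ℕ × ℕ =>
    ph ((t.1:ℝ)+1) * (ph ((t.2.1:ℝ)+1) * (ph ((t.2.2.1:ℝ)+1) * ph ((t.2.2.2:ℝ)+1)))) := by
  have n : ∀ x : ℕ, 0 ≤ ph ((x:ℝ)+1) := fun x => ph_nonneg (by positivity)
  have s := summable_ph
  have s2 := s.mul_of_nonneg s n n
  have s3 := s.mul_of_nonneg s2 n (fun t => mul_nonneg (n _) (n _))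
  exact s.mul_of_nonneg s3 n (fun t => mul_nonneg (n _) (mul_nonneg (n _) (n _)))

lemma summable_ph3 : Summable (fun t : ℕ × ℕ × ℕ =>
    ph ((t.1:ℝ)+1) * (ph ((t.2.1:ℝ)+1) * ph ((t.2.2:ℝ)+1))) := by
  have n : ∀ x : ℕ, 0 ≤ ph ((x:ℝ)+1) := fun x => ph_nonneg (by positivity)
  have s := summable_ph
  have s2 := s.mul_of_nonneg s n n
  exact s.mul_of_nonneg s2 n (fun t => mul_nonneg (n _) (n _))

lemma summable_ph4_int : Summable (fun t : ℕ × ℕ × ℕ × ℕ =>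
    ph ((t.1:ℝ)+1) * (ph |(t.2.1:ℝ) - t.1| * (ph ((t.2.2.1:ℝ)+1) * ph ((t.2.2.2:ℝ)+1)))) := by
  have n : ∀ x : ℕ, 0 ≤ ph ((x:ℝ)+1) := fun x => ph_nonneg (by positivity)
  have n' : ∀ x : ℤ, 0 ≤ ph |(x:ℝ)| := fun x => ph_nonneg (abs_nonneg _)
  have s := summable_ph
  have s2 := s.mul_of_nonneg s n n
  have s3 := summable_ph_int.mul_of_nonneg s2 n' (fun t => mul_nonneg (n _) (n _))
  have s4 := s.mul_of_nonneg s3 n (fun t => mul_nonneg (n' _) (mul_nonneg (n _) (n _)))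
  have hi : Function.Injective (fun t : ℕ × ℕ × ℕ × ℕ =>
      ((t.1, ((t.2.1:ℤ) - (t.1:ℤ), t.2.2)) : ℕ × ℤ × ℕ × ℕ)) := by
    rintro ⟨x1, x2, x3⟩ ⟨y1, y2, y3⟩ h
    simp only [Prod.mk.injEq] at h ⊢
    refine ⟨h.1, ?_, h.2.2⟩
    have := h.1; have := h.2.1
    omega
  refine (s4.comp_injective hi).congr fun t => ?_
  simp

lemma summable_mzv4 {a b c d : ℕ} (ha : 2 ≤ a) (hb : 1 ≤ b) (hc : 1 ≤ c) (hd : 1 ≤ d) :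
    Summable (fun t : ℕ × ℕ × ℕ × ℕ =>
    (1 / ((t.1:ℝ)+t.2.1+t.2.2.1+t.2.2.2+4))^a * (1 / ((t.1:ℝ)+t.2.1+t.2.2.1+3))^b *
    (1 / ((t.1:ℝ)+t.2.1+2))^c * (1/((t.1:ℝ)+1))^d) := by
  refine Summable.of_nonneg_of_le (fun t => by positivity) (fun t => ?_) summable_ph4
  obtain ⟨x, y, r, s⟩ := t
  simp only
  have hx : (0:ℝ) ≤ x := by positivity
  have hy : (0:ℝ) ≤ y := by positivity
  have hr : (0:ℝ) ≤ r := by positivity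
  have hs : (0:ℝ) ≤ s := by positivity
  refine le_trans ?_ (key_bound (K := (x:ℝ)+y+r+s+4) (by positivity) (by positivity) (by positivity) (by positivity)
    (by linarith) (by linarith) (by linarith) (by linarith))
  have aux : ∀ (z : ℝ), 1 ≤ z → ∀ j k : ℕ, j ≤ k → (1/z)^k ≤ (1/z)^j := fun z hz j k hjk =>
    pow_le_pow_of_le_one (by positivity) (by rw [div_le_one (by linarith)]; exact hz) hjk
  calc _ ≤ (1 / ((x:ℝ)+y+r+s+4))^2 * (1 / ((x:ℝ)+y+r+3))^1 *
    (1 / ((x:ℝ)+y+2))^1 * (1/((x:ℝ)+1))^1 := by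
        gcongr ?_ * ?_ * ?_ * ?_
        · exact aux _ (by linarith) _ _ ha
        · exact aux _ (by linarith) _ _ hb
        · exact aux _ (by linarith) _ _ hc
        · exact aux _ (by linarith) _ _ hd
    _ = 1 / (((x:ℝ)+y+r+s+4) * ((x+1) * (x+y+2) * (x+y+r+3) * (x+y+r+s+4))) := by
        field_simp
    _ ≤ _ := by
        gcongr <;> linarith


/-- convolution with the geometric sequence `x, x^2, ...` -/
noncomputable def cv (x : ℝ) (f : ℕ → ℝ) : ℕ → ℝ
  | 0 => 0
  | n+1 => x * (cv x f n + f n)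

/-- powers, with value zero at exponent zero -/
noncomputable def pw (x : ℝ) (n : ℕ) : ℝ := if n = 0 then 0 else x ^ n

/-- derivative sequence -/
noncomputable def dw (x : ℝ) (n : ℕ) : ℝ := n * x ^ (n+1)

lemma pw_zero (x : ℝ) : pw x 0 = 0 := by simp [pw]
lemma pw_succ (x : ℝ) (n : ℕ) : pw x (n+1) = x^(n+1) := by simp [pw]
lemma cv_zero (x : ℝ) (f : ℕ → ℝ) : cv x f 0 = 0 := rfl
lemma cv_succ (x : ℝ) (f : ℕ → ℝ) (n : ℕ) : cv x f (n+1) = x * (cv x f n + f n) := rfl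

lemma cv_eq_sum (x : ℝ) (f : ℕ → ℝ) (n : ℕ) : cv x f n = ∑ a ∈ Icc 1 n, x^a * f (n-a) := by
  have h : cv x f n = ∑ i ∈ range n, x^(i+1) * f (n-(i+1)) := by
    induction n with
    | zero => simp [cv]
    | succ n ih =>
      rw [cv_succ, ih, sum_range_succ', mul_add, mul_sum]
      congr 1
      · refine sum_congr rfl fun i _ => ?_
        rw [Nat.add_sub_add_right]; ring
      · simp
  rw [h, range_eq_Ico, sum_Ico_add' (fun a => x^a * f (n-a)) 0 n 1]
  rfl

lemma cv_eq_sum' (x : ℝ) (f : ℕ → ℝ) (j n : ℕ) (hf : ∀ m, m < j → f m = 0) :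
    cv x f n = ∑ a ∈ Icc 1 (n-j), x^a * f (n-a) := by
  rw [cv_eq_sum]
  symm
  apply sum_subset
  · intro a; simp only [mem_Icc]; omega
  · intro a h1 h2
    simp only [mem_Icc] at h1 h2
    rw [hf _ (by omega), mul_zero]

lemma cv_low (x : ℝ) (f : ℕ → ℝ) (j : ℕ) (hf : ∀ m, m < j → f m = 0) :
    ∀ m, m < j+1 → cv x f m = 0 := by
  intro m hm
  rw [cv_eq_sum' x f j m hf]
  have : m - j = 0 := by omega
  simp [this]

lemma term_eq (x1 x2 x3 x4 : ℝ) (w : ℕ) (hw : 5 ≤ w) :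
    (∑ a ∈ Icc 2 (w - 3), ∑ b ∈ Icc 1 (w - a - 2), ∑ c ∈ Icc 1 (w - a - b - 1),
      (2:ℝ)^c * (x1^a * x2^b * x3^c * x4^(w-a-b-c)))
    = x1 * cv x1 (cv x2 (cv (2*x3) (pw x4))) (w-1) := by
  have l1 : ∀ m, m < 1 → pw x4 m = 0 := by
    intro m hm; obtain rfl : m = 0 := by omega
    exact pw_zero _
  have l2 := cv_low (2*x3) _ 1 l1
  have l3 := cv_low x2 _ 2 l2
  rw [cv_eq_sum' _ _ 3 _ l3, mul_sum]
  have : Icc 2 (w-3) = (Icc 1 (w-1-3)).map (addRightEmbedding 1) := by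
    rw [Finset.map_add_right_Icc]
    congr 1; omega
  rw [this, sum_map]
  refine sum_congr rfl fun a ha => ?_
  simp only [addRightEmbedding_apply]
  simp only [mem_Icc] at ha
  rw [cv_eq_sum' _ _ 2 _ l2, mul_sum, mul_sum]
  have e1 : w - 1 - a - 2 = w - (a+1) - 2 := by omega
  rw [e1]
  refine sum_congr rfl fun b hb => ?_
  simp only [mem_Icc] at hb
  rw [cv_eq_sum' _ _ 1 _ l1, mul_sum, mul_sum, mul_sum]
  have e2 : w - 1 - a - b - 1 = w - (a+1) - b - 1 := by omega
  rw [e2]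
  refine sum_congr rfl fun c hc => ?_
  simp only [mem_Icc] at hc
  have e3 : w - 1 - a - b - c = w - (a+1) - b - c := by omega
  rw [e3, pw, if_neg (by omega)]
  rw [mul_pow]; ring

lemma cv_symm_aux {p q : ℝ} (hp : p ≠ 0) (hq : q ≠ 0) (n : ℕ) :
    q * cv (1/p) (pw (1/q)) (n+1) = cv (1/p) (pw (1/q)) n + pw (1/p) n := by
  induction n with
  | zero => simp [cv, pw]
  | succ n ih =>
    rw [cv_succ (1/p) _ (n+1)]
    have : q * (1 / p * (cv (1 / p) (pw (1 / q)) (n + 1) + pw (1 / q) (n + 1)))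
      = 1/p * (q * cv (1 / p) (pw (1 / q)) (n + 1) + q * pw (1 / q) (n + 1)) := by ring
    rw [this, ih, cv_succ]
    rcases n with _ | n
    · simp [cv, pw]; field_simp
    · rw [pw_succ, pw_succ, pw_succ, pw_succ]; simp only [pow_succ]; field_simp; ring

lemma cv_symm {p q : ℝ} (hp : p ≠ 0) (hq : q ≠ 0) (hpq : p + q ≠ 0) (n : ℕ) :
    cv (2 * (1/(p+q))) (pw (1/p)) n + cv (2 * (1/(p+q))) (pw (1/q)) n = 2 * cv (1/p) (pw (1/q)) n := by
  induction n with
  | zero => simp [cv]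
  | succ n ih =>
    rw [cv_succ, cv_succ]
    have h1 := cv_symm_aux hp hq n
    have h2 : p * cv (1/p) (pw (1/q)) (n+1) = cv (1/p) (pw (1/q)) n + pw (1/q) n := by
      rw [cv_succ]; field_simp
    have h3 : cv (2 * (1/(p+q))) (pw (1/q)) n
      = 2 * cv (1/p) (pw (1/q)) n - cv (2 * (1/(p+q))) (pw (1/p)) n := by linarith
    rw [h3]
    have h4 : cv (1/p) (pw (1/q)) (n+1)
      = (1/(p+q)) * (2 * cv (1/p) (pw (1/q)) n + pw (1/p) n + pw (1/q) n) := by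
      field_simp
      field_simp at h1 h2
      linarith
    rw [h4]; ring

lemma cv_add (x : ℝ) (f g : ℕ → ℝ) (n : ℕ) :
    cv x (fun m => f m + g m) n = cv x f n + cv x g n := by
  induction n with
  | zero => simp [cv]
  | succ n ih => simp only [cv_succ, ih]; ring

lemma cv_smul (x c : ℝ) (f : ℕ → ℝ) (n : ℕ) :
    cv x (fun m => c * f m) n = c * cv x f n := by
  induction n with
  | zero => simp [cv]
  | succ n ih => simp only [cv_succ, ih]; ring

lemma cv_shift (x : ℝ) (f : ℕ → ℝ) (hf : f 0 = 0) (n : ℕ) :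
    cv x f (n+1) = cv x (fun m => f (m+1)) n := by
  induction n with
  | zero => simp [cv, hf]
  | succ n ih => rw [cv_succ, ih, cv_succ]

lemma cv_pw {k p : ℝ} (hk : k ≠ 0) (hp : p ≠ 0) (h : k - p ≠ 0) (n : ℕ) :
    cv (1/k) (pw (1/p)) (n+1) = 1/(k-p) * pw (1/p) n + (-1/(k-p)) * pw (1/k) n := by
  induction n with
  | zero => simp [cv, pw]
  | succ n ih =>
    rw [cv_succ, ih]
    rcases n with _ | n
    · simp [pw]; field_simp; ring
    · simp only [pw_succ, pow_succ]; field_simp; ring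

lemma cv_dw {k p : ℝ} (hk : k ≠ 0) (hp : p ≠ 0) (h : k - p ≠ 0) (n : ℕ) :
    cv (1/k) (dw (1/p)) (n+1) = 1/(k-p) * dw (1/p) n + ((-1/(k-p)^2) * pw (1/p) n
      + 1/(k-p)^2 * pw (1/k) n) := by
  induction n with
  | zero => simp [cv, pw, dw]
  | succ n ih =>
    rw [cv_succ, ih]
    rcases n with _ | n
    · simp [pw, dw]; field_simp; ring
    · simp only [pw_succ, dw, pow_succ]; push_cast; field_simp; ring

lemma cv_same {p : ℝ} (n : ℕ) : cv (1/p) (pw (1/p)) (n+1) = dw (1/p) n := by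
  induction n with
  | zero => simp [cv, pw, dw]
  | succ n ih =>
    rw [cv_succ, ih, pw_succ, dw, dw]; push_cast; ring

lemma cv3_ne {k1 k2 p q : ℝ} (h1 : k1 ≠ 0) (h2 : k2 ≠ 0) (hp : p ≠ 0) (hq : q ≠ 0)
    (h12 : k1 - k2 ≠ 0) (h1p : k1 - p ≠ 0) (h1q : k1 - q ≠ 0) (h2p : k2 - p ≠ 0) (h2q : k2 - q ≠ 0)
    (hpq : q - p ≠ 0) (n : ℕ) :
    cv (1/k1) (cv (1/k2) (cv (1/p) (pw (1/q)))) (n+3)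
      = - (pw (1/k1) n / ((k1-k2)*(k1-p)*(k1-q))) + pw (1/k2) n / ((k1-k2)*(k2-p)*(k2-q))
        + pw (1/p) n / ((q-p)*(k1-p)*(k2-p)) + pw (1/q) n / ((p-q)*(k1-q)*(k2-q)) := by
  have hpq' : p - q ≠ 0 := fun h => hpq (by linarith)
  have s1 : (fun m => cv (1/p) (pw (1/q)) (m+1))
      = fun m => 1/(p-q) * pw (1/q) m + (-1/(p-q)) * pw (1/p) m := funext (cv_pw hp hq hpq')
  have s2 : ∀ m, cv (1/k2) (cv (1/p) (pw (1/q))) (m+2)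
      = 1/(p-q) * (1/(k2-q) * pw (1/q) m + (-1/(k2-q)) * pw (1/k2) m)
       + (-1/(p-q)) * (1/(k2-p) * pw (1/p) m + (-1/(k2-p)) * pw (1/k2) m) := by
    intro m
    rw [cv_shift _ _ (cv_zero _ _), s1, cv_add, cv_smul, cv_smul, cv_pw h2 hq h2q, cv_pw h2 hp h2p]
  have l2 : cv (1/k2) (cv (1/p) (pw (1/q))) 1 = 0 := by simp [cv]
  rw [cv_shift _ _ (cv_zero _ _), cv_shift _ _ l2]
  simp only [add_assoc, Nat.reduceAdd]
  rw [funext s2]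
  simp only [cv_add, cv_smul, cv_pw h1 hq h1q, cv_pw h1 hp h1p, cv_pw h1 h2 h12]
  generalize pw (1/k1) n = a1
  generalize pw (1/k2) n = a2
  generalize pw (1/p) n = a3
  generalize pw (1/q) n = a4
  have hqp : q - p = -(p - q) := by ring
  rw [hqp]
  field_simp
  ring

lemma cv3_eq {k1 k2 p : ℝ} (h1 : k1 ≠ 0) (h2 : k2 ≠ 0) (hp : p ≠ 0)
    (h12 : k1 - k2 ≠ 0) (h1p : k1 - p ≠ 0) (h2p : k2 - p ≠ 0) (n : ℕ) :
    cv (1/k1) (cv (1/k2) (cv (1/p) (pw (1/p)))) (n+3)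
      = - (pw (1/k1) n / ((k1-k2)*(k1-p)*(k1-p))) + pw (1/k2) n / ((k1-k2)*(k2-p)*(k2-p))
        + (dw (1/p) n / ((k1-p)*(k2-p)) - pw (1/p) n / ((k1-p)*(k2-p)) * (1/(k1-p) + 1/(k2-p))) := by
  have s1 : (fun m => cv (1/p) (pw (1/p)) (m+1)) = dw (1/p) := funext cv_same
  have s2 : ∀ m, cv (1/k2) (cv (1/p) (pw (1/p))) (m+2)
      = 1/(k2-p) * dw (1/p) m + ((-1/(k2-p)^2) * pw (1/p) m
      + 1/(k2-p)^2 * pw (1/k2) m) := by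
    intro m
    rw [cv_shift _ _ (cv_zero _ _), s1, cv_dw h2 hp h2p]
  have l2 : cv (1/k2) (cv (1/p) (pw (1/p))) 1 = 0 := by simp [cv]
  rw [cv_shift _ _ (cv_zero _ _), cv_shift _ _ l2]
  simp only [add_assoc, Nat.reduceAdd]
  rw [funext s2]
  simp only [cv_add, cv_smul, cv_pw h1 hp h1p, cv_pw h1 h2 h12, cv_dw h1 hp h1p]
  generalize pw (1/k1) n = a1
  generalize pw (1/k2) n = a2
  generalize pw (1/p) n = a3
  generalize dw (1/p) n = a4
  field_simp
  ring

lemma HasSum.congr_fun' {ι : Type*} {f g : ι → ℝ} {a : ℝ} (h : HasSum f a) (e : ∀ i, g i = f i) : HasSum g a := by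
  have : g = f := funext e
  rw [this]; exact h


/-- original term -/
noncomputable def tT (N : ℕ) (t : ℕ × ℕ × ℕ × ℕ) : ℝ :=
  (1 / ((t.1:ℝ)+t.2.1+t.2.2.1+t.2.2.2+4)) * cv (1 / ((t.1:ℝ)+t.2.1+t.2.2.1+t.2.2.2+4))
    (cv (1 / ((t.1:ℝ)+t.2.1+t.2.2.1+3)) (cv (2 * (1 / ((t.1:ℝ)+t.2.1+2))) (pw (1/((t.1:ℝ)+1))))) (N+4)

/-- symmetrised term -/
noncomputable def tS (N : ℕ) (t : ℕ × ℕ × ℕ × ℕ) : ℝ :=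
  (1 / ((t.1:ℝ)+t.2.1+t.2.2.1+t.2.2.2+4)) * cv (1 / ((t.1:ℝ)+t.2.1+t.2.2.1+t.2.2.2+4))
    (cv (1 / ((t.1:ℝ)+t.2.1+t.2.2.1+3)) (cv (1 / ((t.1:ℝ)+1)) (pw (1/((t.2.1:ℝ)+1))))) (N+4)

lemma hasSum_tT (N : ℕ) : HasSum (tT N)
    (∑ a ∈ Finset.Icc 2 (N+5 - 3), ∑ b ∈ Finset.Icc 1 (N+5 - a - 2),
      ∑ c ∈ Finset.Icc 1 (N+5 - a - b - 1),
        (2 : ℝ) ^ c * mzv ![a, b, c, N+5 - a - b - c]) := by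
  have e : tT N = fun t : ℕ × ℕ × ℕ × ℕ => ∑ a ∈ Finset.Icc 2 (N+5 - 3), ∑ b ∈ Finset.Icc 1 (N+5 - a - 2),
      ∑ c ∈ Finset.Icc 1 (N+5 - a - b - 1),
        (2 : ℝ) ^ c * ((1 / ((t.1:ℝ)+t.2.1+t.2.2.1+t.2.2.2+4))^a * (1 / ((t.1:ℝ)+t.2.1+t.2.2.1+3))^b *
    (1 / ((t.1:ℝ)+t.2.1+2))^c * (1/((t.1:ℝ)+1))^(N+5 - a - b - c)) := by
    funext t
    rw [term_eq _ _ _ _ _ (by omega)]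
    rfl
  rw [e]
  refine hasSum_sum fun a ha => hasSum_sum fun b hb => hasSum_sum fun c hc => ?_
  simp only [Finset.mem_Icc] at ha hb hc
  rw [mzv_four]
  exact (summable_mzv4 (by omega) (by omega) (by omega) (by omega)).hasSum.mul_left _

/-- swap first two coordinates -/
def sw : ℕ × ℕ × ℕ × ℕ ≃ ℕ × ℕ × ℕ × ℕ where
  toFun t := (t.2.1, t.1, t.2.2)
  invFun t := (t.2.1, t.1, t.2.2)
  left_inv t := rfl
  right_inv t := rfl

lemma hasSum_tS (N : ℕ) {S : ℝ} (h : HasSum (tT N) S) : HasSum (tS N) S := by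
  have h2 := (h.add ((sw.hasSum_iff).2 h)).div_const 2
  have e : (S + S)/2 = S := by ring
  rw [e] at h2
  refine h2.congr_fun' ?_
  intro t
  obtain ⟨x, y, r, s⟩ := t
  simp only [tS, tT, sw, Function.comp, Equiv.coe_fn_mk]
  have e1 : (y:ℝ)+x = x+y := add_comm _ _
  simp only [e1]
  rw [← mul_add, ← cv_add]
  have e2 : (fun m => cv (1 / ((x:ℝ) + y + r + 3)) (cv (2 * (1 / ((x:ℝ) + y + 2))) (pw (1 / ((x:ℝ) + 1)))) m +
          cv (1 / ((x:ℝ) + y + r + 3)) (cv (2 * (1 / ((x:ℝ) + y + 2))) (pw (1 / ((y:ℝ) + 1)))) m)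
      = fun m => 2 * cv (1 / ((x:ℝ) + y + r + 3)) (cv (1 / ((x:ℝ)+1)) (pw (1/((y:ℝ)+1)))) m := by
    funext m
    rw [← cv_add, ← cv_smul]
    congr 1
    funext i
    have := cv_symm (p := (x:ℝ)+1) (q := (y:ℝ)+1) (by positivity) (by positivity) (by positivity) i
    rw [show (x:ℝ)+1+((y:ℝ)+1) = x+y+2 by ring] at this
    exact this
  rw [e2, cv_smul]
  ring

noncomputable def A1 (N : ℕ) (t : ℕ × ℕ × ℕ × ℕ) : ℝ :=
  -((1 / ((t.1:ℝ)+t.2.1+t.2.2.1+t.2.2.2+4))^(N+2) *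
    (1 / (((t.2.2.2:ℝ)+1) * ((t.2.1:ℝ)+t.2.2.1+t.2.2.2+3) * ((t.1:ℝ)+t.2.2.1+t.2.2.2+3))))

noncomputable def A2 (N : ℕ) (t : ℕ × ℕ × ℕ × ℕ) : ℝ :=
  (1 / ((t.1:ℝ)+t.2.1+t.2.2.1+t.2.2.2+4)) * (1 / ((t.1:ℝ)+t.2.1+t.2.2.1+3))^(N+1) *
    (1 / (((t.2.2.2:ℝ)+1) * ((t.2.1:ℝ)+t.2.2.1+2) * ((t.1:ℝ)+t.2.2.1+2)))

noncomputable def A3 (N : ℕ) (t : ℕ × ℕ × ℕ × ℕ) : ℝ :=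
  (1 / ((t.1:ℝ)+t.2.1+t.2.2.1+t.2.2.2+4)) * (1 / ((t.1:ℝ)+1))^(N+1) *
    (1 / (((t.2.1:ℝ)-t.1) * ((t.2.1:ℝ)+t.2.2.1+t.2.2.2+3) * ((t.2.1:ℝ)+t.2.2.1+2)))

/-- diagonal part -/
noncomputable def A5' (N : ℕ) (t : ℕ × ℕ × ℕ) : ℝ :=
  (1 / (2*(t.1:ℝ)+t.2.1+t.2.2+4)) *
    (((N:ℝ)+1) * (1 / ((t.1:ℝ)+1))^(N+2) * (1/(((t.1:ℝ)+t.2.1+t.2.2+3) * ((t.1:ℝ)+t.2.1+2)))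
    - (1 / ((t.1:ℝ)+1))^(N+1) * (1/(((t.1:ℝ)+t.2.1+t.2.2+3) * ((t.1:ℝ)+t.2.1+2)))
      * (1/((t.1:ℝ)+t.2.1+t.2.2+3) + 1/((t.1:ℝ)+t.2.1+2)))

noncomputable def A5 (N : ℕ) (t : ℕ × ℕ × ℕ × ℕ) : ℝ := if t.1 = t.2.1 then A5' N (t.1, t.2.2) else 0

lemma tS_decomp (N : ℕ) (t : ℕ × ℕ × ℕ × ℕ) :
    tS N t = A1 N t + A2 N t + A3 N t + A3 N (sw t) + A5 N t := by
  obtain ⟨x, y, r, s⟩ := t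
  have hx : (0:ℝ) ≤ x := by positivity
  have hy : (0:ℝ) ≤ y := by positivity
  have hr : (0:ℝ) ≤ r := by positivity
  have hs : (0:ℝ) ≤ s := by positivity
  simp only [tS, A1, A2, A3, A5, sw, Equiv.coe_fn_mk]
  have d1 : ((x:ℝ)+y+r+s+4) - (x+y+r+3) = s+1 := by ring
  have d2 : ((x:ℝ)+y+r+s+4) - (x+1) = y+r+s+3 := by ring
  have d3 : ((x:ℝ)+y+r+s+4) - (y+1) = x+r+s+3 := by ring
  have d4 : ((x:ℝ)+y+r+3) - (x+1) = y+r+2 := by ring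
  have d5 : ((x:ℝ)+y+r+3) - (y+1) = x+r+2 := by ring
  have d6 : ((y:ℝ)+1) - (x+1) = y-x := by ring
  have d7 : ((x:ℝ)+1) - (y+1) = x-y := by ring
  have d8 : (y:ℝ)+x+r+s+4 = x+y+r+s+4 := by ring
  rcases eq_or_ne x y with rfl | hxy
  · rw [if_pos rfl]
    have h := cv3_eq (k1 := (x:ℝ)+x+r+s+4) (k2 := (x:ℝ)+x+r+3) (p := (x:ℝ)+1) (by positivity) (by positivity)
      (by positivity) (by rw [d1]; positivity) (by rw [d2]; positivity) (by rw [d4]; positivity) (N+1)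
    rw [h, d1, d2, d4]
    simp only [sub_self, zero_mul, div_zero, mul_zero, add_zero, A5', pw_succ, dw]
    rw [show 2*(x:ℝ)+r+s+4 = x+x+r+s+4 by ring]
    push_cast
    ring
  · rw [if_neg hxy]
    have hne : (y:ℝ) - x ≠ 0 := sub_ne_zero.2 (by exact_mod_cast hxy.symm)
    have h := cv3_ne (k1 := (x:ℝ)+y+r+s+4) (k2 := (x:ℝ)+y+r+3) (p := (x:ℝ)+1) (q := (y:ℝ)+1) (by positivity) (by positivity)
      (by positivity) (by positivity) (by rw [d1]; positivity) (by rw [d2]; positivity) (by rw [d3]; positivity)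
      (by rw [d4]; positivity) (by rw [d5]; positivity) (by rw [d6]; exact hne) (N+1)
    rw [h, d1, d2, d3, d4, d5, d6, d7, d8]
    simp only [pw_succ]
    ring

lemma one_div_pow_le {z : ℝ} (hz : 1 ≤ z) {j k : ℕ} (hjk : j ≤ k) : (1/z)^k ≤ (1/z)^j :=
    pow_le_pow_of_le_one (by positivity) (by rw [div_le_one (by linarith)]; exact hz) hjk

lemma summable_A1 (N : ℕ) : Summable (A1 N) := by
  refine Summable.neg ?_
  refine Summable.of_nonneg_of_le (fun t => by positivity) (fun t => ?_) summable_ph4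
  obtain ⟨x, y, r, s⟩ := t
  simp only
  have hx : (0:ℝ) ≤ x := by positivity
  have hy : (0:ℝ) ≤ y := by positivity
  have hr : (0:ℝ) ≤ r := by positivity
  have hs : (0:ℝ) ≤ s := by positivity
  refine le_trans ?_ (key_bound (K := (x:ℝ)+y+r+s+4) (by positivity) (by positivity) (by positivity) (by positivity)
    (by linarith) (by linarith) (by linarith) (by linarith))
  calc _ ≤ (1 / ((x:ℝ)+y+r+s+4))^2 * (1 / (((s:ℝ)+1) * ((y:ℝ)+r+s+3) * ((x:ℝ)+r+s+3))) := by
        gcongr ?_ * _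
        exact one_div_pow_le (by linarith) (by omega)
    _ = 1 / (((x:ℝ)+y+r+s+4) * ((x+r+s+3) * (y+r+s+3) * (x+y+r+s+4) * (s+1))) := by
        field_simp
    _ ≤ _ := by
        gcongr <;> linarith

lemma summable_A2 (N : ℕ) : Summable (A2 N) := by
  refine Summable.of_nonneg_of_le (fun t => by unfold A2; positivity) (fun t => ?_) summable_ph4
  obtain ⟨x, y, r, s⟩ := t
  simp only [A2]
  have hx : (0:ℝ) ≤ x := by positivity
  have hy : (0:ℝ) ≤ y := by positivity
  have hr : (0:ℝ) ≤ r := by positivity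
  have hs : (0:ℝ) ≤ s := by positivity
  refine le_trans ?_ (key_bound (K := (x:ℝ)+y+r+s+4) (by positivity) (by positivity) (by positivity) (by positivity)
    (by linarith) (by linarith) (by linarith) (by linarith))
  calc _ ≤ (1 / ((x:ℝ)+y+r+s+4)) * (1 / ((x:ℝ)+y+r+3))^1 * (1 / (((s:ℝ)+1) * ((y:ℝ)+r+2) * ((x:ℝ)+r+2))) := by
        gcongr _ * ?_ * _
        exact one_div_pow_le (by linarith) (by omega)
    _ = 1 / (((x:ℝ)+y+r+s+4) * ((x+r+2) * (y+r+2) * (x+y+r+3) * (s+1))) := by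
        field_simp
    _ ≤ _ := by
        gcongr <;> linarith

lemma summable_A3 (N : ℕ) : Summable (A3 N) := by
  refine Summable.of_norm_bounded summable_ph4_int (fun t => ?_)
  obtain ⟨x, y, r, s⟩ := t
  simp only [A3]
  have hx : (0:ℝ) ≤ x := by positivity
  have hy : (0:ℝ) ≤ y := by positivity
  have hr : (0:ℝ) ≤ r := by positivity
  have hs : (0:ℝ) ≤ s := by positivity
  rcases eq_or_ne x y with rfl | hxy
  · simp [ph]
  have hne : (y:ℝ) - x ≠ 0 := sub_ne_zero.2 (by exact_mod_cast hxy.symm)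
  have ha : 0 < |(y:ℝ) - x| := abs_pos.2 hne
  refine le_trans ?_ (key_bound (K := (x:ℝ)+y+r+s+4) (by positivity) ha (by positivity) (by positivity)
    (by linarith) (by rw [abs_le]; constructor <;> linarith) (by linarith) (by linarith))
  rw [Real.norm_eq_abs, abs_mul, abs_of_nonneg (a := _ * _) (by positivity), abs_div, abs_mul, abs_mul, abs_one,
    abs_of_nonneg (a := (y:ℝ)+r+s+3) (by positivity), abs_of_nonneg (a := (y:ℝ)+r+2) (by positivity)]
  calc _ ≤ (1 / ((x:ℝ)+y+r+s+4)) * (1 / ((x:ℝ)+1))^1 * (1 / (|(y:ℝ)-x| * ((y:ℝ)+r+s+3) * ((y:ℝ)+r+2))) := by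
        gcongr _ * ?_ * _
        exact one_div_pow_le (by linarith) (by omega)
    _ = 1 / (((x:ℝ)+y+r+s+4) * ((x+1) * |(y:ℝ)-x| * (y+r+2) * (y+r+s+3))) := by
        field_simp
    _ ≤ _ := by
        gcongr <;> linarith

lemma summable_diag {e : ℕ} (he : 1 ≤ e) (f : ℕ × ℕ × ℕ → ℝ)
    (hf : ∀ t, 0 ≤ f t ∧ f t ≤ (1 / (2*(t.1:ℝ)+t.2.1+t.2.2+4)) *
      (1 / ((t.1:ℝ)+1))^e * (1/(((t.1:ℝ)+t.2.1+t.2.2+3) * ((t.1:ℝ)+t.2.1+2)))) : Summable f := by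
  have h0 : Summable (fun t : ℕ × ℕ × ℕ =>
      ph ((t.1:ℝ)+1) * (ph 1 * (ph ((t.2.1:ℝ)+1) * ph ((t.2.2:ℝ)+1)))) := by
    refine (summable_ph3.mul_left (ph 1)).congr fun t => ?_
    ring
  refine Summable.of_nonneg_of_le (fun t => (hf t).1) (fun t => (hf t).2.trans ?_) h0
  obtain ⟨x, r, s⟩ := t
  simp only
  have hx : (0:ℝ) ≤ x := by positivity
  have hr : (0:ℝ) ≤ r := by positivity
  have hs : (0:ℝ) ≤ s := by positivity
  refine le_trans ?_ (key_bound (K := 2*(x:ℝ)+r+s+4) (by positivity) (by positivity) (by positivity) (by positivity)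
    (by linarith) (by linarith) (by linarith) (by linarith))
  calc _ ≤ (1 / (2*(x:ℝ)+r+s+4)) * (1 / ((x:ℝ)+1))^1 * (1 / (((x:ℝ)+r+s+3) * ((x:ℝ)+r+2))) := by
        gcongr _ * ?_ * _
        exact one_div_pow_le (by linarith) (by omega)
    _ = 1 / ((2*(x:ℝ)+r+s+4) * ((x+1) * 1 * (x+r+2) * (x+r+s+3))) := by
        field_simp
    _ ≤ _ := by
        gcongr <;> linarith

lemma hasSum_A5 (N : ℕ) {S : ℝ} (h : HasSum (A5' N) S) : HasSum (A5 N) S := by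
  have hi : Function.Injective (fun t : ℕ × ℕ × ℕ => ((t.1, t.1, t.2) : ℕ × ℕ × ℕ × ℕ)) := by
    rintro ⟨x, y⟩ ⟨x', y'⟩ h
    simp only [Prod.mk.injEq] at h ⊢
    exact ⟨h.1, h.2.2⟩
  refine (hi.hasSum_iff (f := A5 N) ?_).1 ?_
  · rintro ⟨x, y, z⟩ hn
    rw [A5, if_neg]
    rintro hxy
    simp only at hxy
    subst hxy
    exact hn ⟨(x, z), rfl⟩
  · refine h.congr_fun' ?_
    intro t
    simp [A5]

lemma hsum_prod {α β : Type*} {f : α × β → ℝ} (hf : Summable f) {g : α → ℝ}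
    (hg : ∀ a, HasSum (fun b => f (a, b)) (g a)) {S : ℝ} (h : HasSum g S) : HasSum f S := by
  have h1 := HasSum.prod_fiberwise hf.hasSum hg
  rw [← h1.unique h]
  exact hf.hasSum

lemma hsum_fiber {α β : Type*} {f : α → ℝ} {S : ℝ} (h : HasSum f S) (φ : α → β) (F : β → Finset α)
    (hF : ∀ a b, a ∈ F b ↔ φ a = b) : HasSum (fun b => ∑ a ∈ F b, f a) S := by
  have h1 := ((Equiv.sigmaFiberEquiv φ).hasSum_iff).2 h
  refine HasSum.sigma h1 fun b => ?_
  have h2 := (F b).hasSum f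
  have h3 := ((Equiv.subtypeEquivRight (fun a => hF a b)).symm.hasSum_iff).2 h2
  exact h3

lemma hsum_anti {f : ℕ × ℕ → ℝ} {S : ℝ} (h : HasSum f S) :
    HasSum (fun n => ∑ p ∈ antidiagonal n, f p) S :=
  hsum_fiber h (fun p => p.1 + p.2) (fun n => antidiagonal n) (by simp)

lemma tele {c : ℝ} (hc : 0 ≤ c) {n : ℕ} (hn : n ≠ 0) :
    HasSum (fun s : ℕ => 1 / ((c+s+1) * (c+s+1+n))) ((1/(n:ℝ)) * ∑ i ∈ range n, 1/(c+i+1)) := by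
  have hn' : (n:ℝ) ≠ 0 := by exact_mod_cast hn
  rw [hasSum_iff_tendsto_nat_of_nonneg (fun s => by positivity)]
  have e : ∀ M : ℕ, ∑ s ∈ range M, 1 / ((c+s+1) * (c+s+1+n)) =
      (1/(n:ℝ)) * (∑ i ∈ range n, 1/(c+i+1) - ∑ i ∈ range n, 1/(c+M+i+1)) := by
    intro M
    induction M with
    | zero => simp
    | succ M ih =>
      rw [sum_range_succ, ih]
      have h := sum_range_sub' (fun i : ℕ => 1/(c+M+i+1)) n
      rw [sum_sub_distrib] at h
      have h' : ∑ i ∈ range n, 1/(c+((M+1:ℕ):ℝ)+i+1) = ∑ i ∈ range n, 1/(c+M+((i+1:ℕ):ℝ)+1) := by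
        refine sum_congr rfl fun i _ => ?_
        push_cast; ring_nf
      rw [h']
      have e2 : 1 / ((c + M + 1) * (c + M + 1 + n)) =
          (1/(n:ℝ)) * (1 / (c + M + ((0:ℕ):ℝ) + 1) - 1 / (c + M + n + 1)) := by
        have h1 : c + M + 1 ≠ 0 := by positivity
        have h2 : c + M + n + 1 ≠ 0 := by positivity
        have h3 : c + M + 1 + n ≠ 0 := by positivity
        push_cast
        rw [add_zero]
        field_simp
        ring
      rw [e2, ← h]
      ring
  simp only [e]
  have hz : Filter.Tendsto (fun M : ℕ => ∑ i ∈ range n, 1/(c+M+i+1)) Filter.atTop (nhds (∑ i ∈ range n, 0)) := by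
    refine tendsto_finsetSum _ fun i _ => ?_
    simp only [one_div]
    refine Filter.Tendsto.inv_tendsto_atTop ?_
    refine Filter.tendsto_atTop_mono (fun M : ℕ => ?_) tendsto_natCast_atTop_atTop
    have : (0:ℝ) ≤ i := by positivity
    linarith
  rw [sum_const_zero] at hz
  have := (tendsto_const_nhds (x := ∑ i ∈ range n, 1/(c+i+1))).sub hz |>.const_mul (1/(n:ℝ))
  rwa [sub_zero] at this

lemma sum_Hs (d i : ℕ) : ∑ x ∈ range i, 1/((x:ℝ)+d+1) = Hs 1 (i+d) - Hs 1 d := by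
  induction i with
  | zero => simp
  | succ i ih =>
    rw [sum_range_succ, ih, show i+1+d = i+d+1 by ring, Hs_succ]
    push_cast; ring

lemma Hs_one (n : ℕ) : Hs 1 n = ∑ i ∈ range n, 1/((i:ℝ)+1) := by simp [Hs]

lemma ysum (i d : ℕ) : ∑ p ∈ antidiagonal i, 1 / (((p.2:ℝ)+d+1) * ((p.1:ℝ)+d+1))
    = 2 / ((i:ℝ)+2*d+2) * (Hs 1 (i+d+1) - Hs 1 d) := by
  have h1 : ∀ p ∈ antidiagonal i, 1 / (((p.2:ℝ)+d+1) * ((p.1:ℝ)+d+1))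
      = 1 / ((i:ℝ)+2*d+2) * (1/((p.1:ℝ)+d+1) + 1/((p.2:ℝ)+d+1)) := by
    intro p hp
    rw [HasAntidiagonal.mem_antidiagonal] at hp
    have : (i:ℝ) = p.1 + p.2 := by rw [← hp]; push_cast; ring
    rw [this]
    field_simp
    ring
  rw [sum_congr rfl h1, ← mul_sum, sum_add_distrib]
  have h2 : ∑ p ∈ antidiagonal i, 1/((p.1:ℝ)+d+1) = Hs 1 (i+d+1) - Hs 1 d := by
    rw [Finset.Nat.sum_antidiagonal_eq_sum_range_succ (fun a _ => 1/((a:ℝ)+d+1)) i, sum_Hs]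
    congr 2; omega
  have h3 : ∑ p ∈ antidiagonal i, 1/((p.2:ℝ)+d+1) = Hs 1 (i+d+1) - Hs 1 d := by
    rw [← h2, ← Finset.Nat.sum_antidiagonal_swap]
    rfl
  rw [h2, h3]
  ring

/-- kernel -/
noncomputable def GG (m l : ℕ) : ℝ := 2 * (Hs 1 m - Hs 1 (l+1)) / ((m:ℝ)+l+2)

lemma eval_A1 (N : ℕ) : HasSum (fun m : ℕ => -((1/((m:ℝ)+1))^(N+2) * ∑ l ∈ range m, Hs 1 l * GG m l))
    (∑' t, A1 N t) := by
  let e : (ℕ × ℕ) × (ℕ × ℕ) ≃ ℕ × ℕ × ℕ × ℕ := (Equiv.prodComm _ _).trans (Equiv.prodAssoc ℕ ℕ (ℕ × ℕ))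
  have h1 := (e.hasSum_iff).2 (summable_A1 N).hasSum
  have h2 := hsum_fiber h1 (fun t => (t.1.1+t.1.2, t.2.1+t.2.2))
    (fun b => antidiagonal b.1 ×ˢ antidiagonal b.2) (by
      rintro ⟨⟨a, b⟩, ⟨c, d⟩⟩ ⟨i, j⟩; simp)
  have h3 := hsum_anti h2
  rw [← hasSum_nat_add_iff' 3]
  have z : ∑ i ∈ range 3, -((1/((i:ℝ)+1))^(N+2) * ∑ l ∈ range i, Hs 1 l * GG i l) = 0 := by
    simp [sum_range_succ, Hs_zero, GG]
  rw [z, sub_zero]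
  refine h3.congr_fun' fun m => ?_
  have h4 : ∀ b ∈ antidiagonal m, ∑ a ∈ antidiagonal b.1 ×ˢ antidiagonal b.2, (A1 N ∘ e) a
     = -((1/((m:ℝ)+4))^(N+2) * (Hs 1 (b.1+1) * (2 / ((m:ℝ)+b.1+6) * (Hs 1 (m+3) - Hs 1 (b.1+2))))) := by
    rintro ⟨j, i⟩ hb
    rw [HasAntidiagonal.mem_antidiagonal] at hb
    have hm : (m:ℝ) = j + i := by rw [← hb]; push_cast; ring
    simp only
    have y := ysum i (j+2)
    have e1 : ∑ p ∈ antidiagonal j, 1/((p.2:ℝ)+1) = Hs 1 (j+1) := by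
      rw [← Finset.Nat.sum_antidiagonal_swap, Hs_one]
      exact Finset.Nat.sum_antidiagonal_eq_sum_range_succ (fun a _ => 1/((a:ℝ)+1)) j
    have e2 : i + (j+2) + 1 = m + 3 := by omega
    have e3 : (i:ℝ) + 2 * ((j+2:ℕ):ℝ) + 2 = m + j + 6 := by rw [hm]; push_cast; ring
    rw [e2, e3] at y
    rw [← y, ← e1, sum_product, sum_mul_sum, mul_sum, ← sum_neg_distrib]
    refine sum_congr rfl fun p hp => ?_
    rw [mul_sum, ← sum_neg_distrib]
    refine sum_congr rfl fun p' hp' => ?_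
    rw [HasAntidiagonal.mem_antidiagonal] at hp hp'
    have hj : (j:ℝ) = p.1 + p.2 := by rw [← hp]; push_cast; ring
    have hi : (i:ℝ) = p'.1 + p'.2 := by rw [← hp']; push_cast; ring
    simp only [Function.comp, e, Equiv.trans_apply, Equiv.prodComm_apply, Prod.swap, Equiv.prodAssoc_apply, A1]
    rw [hm, hi]
    push_cast
    rw [hj]
    congr 1
    rw [show (p'.1:ℝ) + p'.2 + p.1 + p.2 + 4 = p.1+p.2+(p'.1 + p'.2) + 4 by ring,
      one_div_mul_one_div, mul_assoc]
    congr 2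
    ring
  rw [sum_congr rfl h4, Finset.Nat.sum_antidiagonal_eq_sum_range_succ (fun a _ => -((1/((m:ℝ)+4))^(N+2) * (Hs 1 (a+1) * (2 / ((m:ℝ)+a+6) * (Hs 1 (m+3) - Hs 1 (a+2)))))) m]
  rw [sum_neg_distrib, ← mul_sum]
  congr 1
  rw [sum_range_succ', sum_range_succ]
  simp only [Hs_zero, zero_mul, add_zero, GG, sub_self, mul_zero, zero_div]
  congr 1
  · push_cast; ring_nf
  · refine sum_congr rfl fun l _ => ?_
    push_cast
    ring_nf

/-- reordering -/
def eq2 : (ℕ × ℕ × ℕ) × ℕ ≃ ℕ × ℕ × ℕ × ℕ where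
  toFun t := (t.1.2.1, t.1.2.2, t.1.1, t.2)
  invFun t := ((t.2.2.1, t.1, t.2.1), t.2.2.2)
  left_inv _ := rfl
  right_inv _ := rfl

lemma eval_A2 (N : ℕ) : HasSum (fun m : ℕ => (1/((m:ℝ)+1))^(N+2) * (Hs 1 (m+1) * ∑ l ∈ range m, GG m l))
    (∑' t, A2 N t) := by
  have h1 := (eq2.hasSum_iff).2 (summable_A2 N).hasSum
  have h2 := HasSum.prod_fiberwise (g := fun p : ℕ × ℕ × ℕ =>
      (1/((p.2.1:ℝ)+p.2.2+p.1+3))^(N+2) * Hs 1 (p.2.1+p.2.2+p.1+3) *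
      (1 / (((p.2.2:ℝ)+p.1+2) * ((p.2.1:ℝ)+p.1+2)))) h1 (by
    rintro ⟨r, x, y⟩
    have h := (tele (c := 0) le_rfl (n := x+y+r+3) (by omega)).mul_left
      ((1 / ((x:ℝ)+y+r+3))^(N+1) * (1 / (((y:ℝ)+r+2) * ((x:ℝ)+r+2))))
    have e : (1 / ((x:ℝ)+y+r+3))^(N+1) * (1 / (((y:ℝ)+r+2) * ((x:ℝ)+r+2))) *
        (1 / ((x+y+r+3 : ℕ):ℝ) * ∑ i ∈ range (x+y+r+3), 1/(0+(i:ℝ)+1))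
        = (1/((x:ℝ)+y+r+3))^(N+2) * Hs 1 (x+y+r+3) * (1 / (((y:ℝ)+r+2) * ((x:ℝ)+r+2))) := by
      simp only [zero_add, ← Hs_one]
      push_cast
      ring
    rw [e] at h
    refine h.congr_fun' fun s => ?_
    simp only [Function.comp, eq2, Equiv.coe_fn_mk, A2]
    push_cast
    field_simp
    ring)
  have h3 := hsum_fiber h2 (fun t => (t.1, t.2.1+t.2.2))
    (fun b => {b.1} ×ˢ antidiagonal b.2) (by
      rintro ⟨a, b, c⟩ ⟨i, j⟩; simp; omega)
  have h4 := hsum_anti h3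
  rw [← hasSum_nat_add_iff' 2]
  have z : ∑ i ∈ range 2, (1/((i:ℝ)+1))^(N+2) * (Hs 1 (i+1) * ∑ l ∈ range i, GG i l) = 0 := by
    simp [sum_range_succ, GG]
  rw [z, sub_zero]
  refine h4.congr_fun' fun m => ?_
  have h5 : ∀ b ∈ antidiagonal m, ∑ p ∈ ({b.1} ×ˢ antidiagonal b.2 : Finset (ℕ × ℕ × ℕ)),
      (1/((p.2.1:ℝ)+p.2.2+p.1+3))^(N+2) * Hs 1 (p.2.1+p.2.2+p.1+3) *
      (1 / (((p.2.2:ℝ)+p.1+2) * ((p.2.1:ℝ)+p.1+2)))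
     = (1/((m:ℝ)+3))^(N+2) * (Hs 1 (m+3) * (2 / ((m:ℝ)+b.1+4) * (Hs 1 (m+2) - Hs 1 (b.1+1)))) := by
    rintro ⟨r, i⟩ hb
    rw [HasAntidiagonal.mem_antidiagonal] at hb
    simp only at hb
    have hm : (m:ℝ) = r + i := by rw [← hb]; push_cast; ring
    simp only
    have y := ysum i (r+1)
    have e2 : i + (r+1) + 1 = m + 2 := by omega
    have e3 : (i:ℝ) + 2 * ((r+1:ℕ):ℝ) + 2 = m + r + 4 := by rw [hm]; push_cast; ring
    rw [e2, e3] at y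
    rw [← y, sum_product, sum_singleton, mul_sum, mul_sum]
    refine sum_congr rfl fun p hp => ?_
    rw [HasAntidiagonal.mem_antidiagonal] at hp
    have hi : (i:ℝ) = p.1 + p.2 := by rw [← hp]; push_cast; ring
    rw [show p.1+p.2+r+3 = m+3 by omega, show (p.1:ℝ)+p.2+r+3 = m+3 by rw [hm, hi]; ring]
    push_cast
    rw [mul_assoc]
    ring_nf
  rw [sum_congr rfl h5, Finset.Nat.sum_antidiagonal_eq_sum_range_succ (fun a _ => (1/((m:ℝ)+3))^(N+2) * (Hs 1 (m+3) * (2 / ((m:ℝ)+a+4) * (Hs 1 (m+2) - Hs 1 (a+1))))) m]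
  rw [← mul_sum, ← mul_sum, sum_range_succ _ (m+1)]
  simp only [GG, sub_self, mul_zero, zero_div, add_zero]
  congr 1
  · push_cast; ring_nf
  · congr 1
    refine sum_congr rfl fun l _ => ?_
    push_cast
    ring_nf

noncomputable def Psi (n : ℕ) (c : ℝ) : ℝ :=
  (1/(n:ℝ)) * ∑ i ∈ range n, (1/((i:ℝ)+1)) * ∑ l ∈ range (i+1), 1/(c+l+1)

lemma rs1 {c : ℝ} (hc : 0 ≤ c) {n : ℕ} (hn : n ≠ 0) (r : ℕ) :
    HasSum (fun s : ℕ => 1 / ((c+r+s+2+n) * ((c+r+s+2) * (c+r+1))))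
      (1/(c+r+1) * ((1/(n:ℝ)) * ∑ i ∈ range n, 1/(c+r+i+2))) := by
  have h := (tele (c := c+r+1) (by positivity) hn).mul_left (1/(c+r+1))
  have e : ∑ i ∈ range n, 1/(c+r+1+i+1) = ∑ i ∈ range n, 1/(c+r+i+2) :=
    sum_congr rfl fun i _ => by ring_nf
  rw [e] at h
  refine h.congr_fun' fun s => ?_
  field_simp
  ring

lemma rs2 {c : ℝ} (hc : 0 ≤ c) (n : ℕ) :
    HasSum (fun r : ℕ => 1/(c+r+1) * ((1/(n:ℝ)) * ∑ i ∈ range n, 1/(c+r+i+2))) (Psi n c) := by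
  have h : HasSum (fun r : ℕ => (1/(n:ℝ)) * ∑ i ∈ range n, 1 / ((c+r+1)*(c+r+1+(i+1:ℕ))))
      ((1/(n:ℝ)) * ∑ i ∈ range n, (1/((i+1:ℕ):ℝ)) * ∑ l ∈ range (i+1), 1/(c+l+1)) :=
    (hasSum_sum fun i _ => tele hc (n := i+1) (by omega)).mul_left _
  have e : ((1/(n:ℝ)) * ∑ i ∈ range n, (1/((i+1:ℕ):ℝ)) * ∑ l ∈ range (i+1), 1/(c+l+1)) = Psi n c := by
    unfold Psi; push_cast; rfl
  rw [e] at h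
  refine h.congr_fun' fun r => ?_
  rw [mul_left_comm, mul_sum]
  congr 1
  refine sum_congr rfl fun i _ => ?_
  push_cast
  rw [one_div_mul_one_div]
  congr 2
  ring

lemma yq (x l : ℕ) : HasSum (fun y : ℕ => 1/(((y:ℝ)-x)*((y:ℝ)+l+2)))
    ((1/((x:ℝ)+l+2)) * (Hs 1 (l+1) - Hs 1 x + 1/((x:ℝ)+l+2))) := by
  rw [← hasSum_nat_add_iff' (x+1)]
  have h := tele (c := 0) le_rfl (n := x+l+2) (by omega)
  have e1 : ∑ i ∈ range (x+1), 1/(((i:ℝ)-x)*((i:ℝ)+l+2)) =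
      -(1/((x:ℝ)+l+2)) * (Hs 1 x + (Hs 1 (x+l+1) - Hs 1 (l+1))) := by
    rw [sum_range_succ, sub_self, zero_mul, div_zero, add_zero]
    have h1 : Hs 1 x = ∑ i ∈ range x, 1/((x:ℝ)-i) := by
      rw [Hs_one, ← sum_range_reflect]
      refine sum_congr rfl fun i hi => ?_
      rw [mem_range] at hi
      rw [show x - 1 - i = x - (1+i) by omega, Nat.cast_sub (by omega)]
      push_cast; ring_nf
    have h2 := sum_Hs (l+1) x
    rw [show x+l+1 = x+(l+1) by ring, ← h2, h1, ← sum_add_distrib, mul_sum]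
    refine sum_congr rfl fun i hi => ?_
    rw [mem_range] at hi
    have hix : (i:ℝ) < x := by exact_mod_cast hi
    have a1 : (i:ℝ) - x ≠ 0 := by linarith
    have a2 : (x:ℝ) - i ≠ 0 := by linarith
    push_cast
    field_simp
    ring
  have e2 : (1 / ((x+l+2 : ℕ):ℝ) * ∑ i ∈ range (x+l+2), 1/(0+(i:ℝ)+1)) =
     ((1/((x:ℝ)+l+2)) * (Hs 1 (l+1) - Hs 1 x + 1/((x:ℝ)+l+2)))
       - ∑ i ∈ range (x+1), 1/(((i:ℝ)-x)*((i:ℝ)+l+2)) := by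
    rw [e1]
    simp only [zero_add, ← Hs_one]
    rw [show x+l+2 = x+l+1+1 by ring, Hs_succ]
    push_cast
    field_simp
    ring
  rw [e2] at h
  refine h.congr_fun' fun s => ?_
  push_cast
  ring_nf

noncomputable def C3 (m : ℕ) : ℝ :=
  (1/((m:ℝ)+1)) * ∑ i ∈ range (m+1), (1/((i:ℝ)+1)) * ∑ l ∈ range (i+1),
    ((1/((m:ℝ)+l+2)) * (Hs 1 (l+1) - Hs 1 m + 1/((m:ℝ)+l+2)))

lemma eval_A3 (N : ℕ) : HasSum (fun m : ℕ => (1/((m:ℝ)+1))^(N+1) * C3 m) (∑' t, A3 N t) := by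
  have hs := summable_A3 N
  refine HasSum.prod_fiberwise hs.hasSum fun x => ?_
  have hs1 := hs.prod_factor x
  refine hsum_prod hs1 (g := fun y : ℕ => (1 / ((x:ℝ)+1))^(N+1) * (1/((y:ℝ)-x) * Psi (x+1) ((y:ℝ)+1))) (fun y => ?_) ?_
  · have hs2 := hs1.prod_factor y
    have h0 : (0:ℝ) ≤ (y:ℝ)+1 := by positivity
    refine hsum_prod hs2 (fun r => ?_) (((rs2 h0 (x+1)).mul_left _).mul_left _)
    refine (((rs1 h0 (n := x+1) (by omega) r).mul_left _).mul_left _).congr_fun' fun s => ?_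
    simp only [A3]
    push_cast
    rw [show (y:ℝ)+1+r+s+2+(x+1) = x+y+r+s+4 by ring, show (y:ℝ)+1+r+s+2 = y+r+s+3 by ring,
      show (y:ℝ)+1+r+1 = y+r+2 by ring]
    simp only [one_div, mul_inv]
    ring
  · refine HasSum.mul_left _ ?_
    have h : HasSum (fun y : ℕ => (1/((x:ℝ)+1)) * ∑ i ∈ range (x+1), (1/((i:ℝ)+1)) * ∑ l ∈ range (i+1),
      1/(((y:ℝ)-x)*((y:ℝ)+l+2))) (C3 x) :=
      (hasSum_sum fun i _ => (hasSum_sum fun l _ => yq x l).mul_left _).mul_left _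
    refine h.congr_fun' fun y => ?_
    unfold Psi
    push_cast
    rw [mul_left_comm, mul_sum]
    congr 1
    refine sum_congr rfl fun i _ => ?_
    rw [mul_left_comm, mul_sum]
    congr 1
    refine sum_congr rfl fun l _ => ?_
    rw [one_div_mul_one_div]
    congr 2
    ring

noncomputable def t2 (n : ℕ) : ℝ := ∑' s : ℕ, 1/((n:ℝ)+s+1)^2

lemma summable_inv_pow {e : ℕ} (he : 2 ≤ e) (n : ℕ) : Summable (fun s : ℕ => 1/((n:ℝ)+s+1)^e) := by
  have h := (Real.summable_one_div_nat_pow (p := e)).2 (by omega)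
  have h2 := (summable_nat_add_iff (n+1)).2 h
  refine h2.congr fun x => ?_
  push_cast
  ring_nf

lemma hasSum_t2 (n : ℕ) : HasSum (fun s : ℕ => 1/((n:ℝ)+s+1)^2) (t2 n) :=
  (summable_inv_pow le_rfl n).hasSum

lemma t2_succ (n : ℕ) : t2 (n+1) = t2 n - 1/((n:ℝ)+1)^2 := by
  have h := (hasSum_nat_add_iff' (f := fun s : ℕ => 1/((n:ℝ)+s+1)^2) 1).2 (hasSum_t2 n)
  simp only [range_one, sum_singleton, Nat.cast_zero, add_zero] at h
  refine HasSum.unique (hasSum_t2 (n+1)) (h.congr_fun' fun s => ?_)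
  push_cast; ring_nf

/-- summability of the double zeta at (2,1) -/
lemma summable_z21 : Summable (fun p : ℕ × ℕ => 1/(((p.1:ℝ)+1)*((p.1:ℝ)+p.2+2)^2)) := by
  have h0 : Summable (fun t : ℕ × ℕ => ph ((t.1:ℝ)+1) * ph ((t.2:ℝ)+1)) :=
    summable_ph.mul_of_nonneg summable_ph (fun x => ph_nonneg (by positivity)) (fun x => ph_nonneg (by positivity))
  have h1 := (h0.mul_left (ph 1 * ph 1))
  refine Summable.of_nonneg_of_le (fun t => by positivity) (fun t => ?_) h1
  obtain ⟨x, r⟩ := t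
  have hx : (0:ℝ) ≤ x := by positivity
  have hr : (0:ℝ) ≤ r := by positivity
  have k := key_bound (K := (x:ℝ)+r+2) (a := 1) (b := 1) (c := x+1) (d := r+1) (by positivity) (by positivity) (by positivity) (by positivity)
    (by linarith) (by linarith) (by linarith) (by linarith)
  calc _ ≤ _ := ?_
    _ ≤ _ := k
    _ = _ := by ring
  apply one_div_le_one_div_of_le (by positivity)
  have : (r:ℝ)+1 ≤ x+r+2 := by linarith
  calc _ = ((x:ℝ)+1)*((x+r+2)*(r+1)) := by ring
    _ ≤ ((x:ℝ)+1)*((x+r+2)*(x+r+2)) := by gcongr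
    _ = _ := by ring

noncomputable def z3 : ℝ := ∑' m : ℕ, 1/((m:ℝ)+1)^3

lemma summable_z3 : Summable (fun m : ℕ => 1/((m:ℝ)+1)^3) := by
  have := summable_inv_pow (e := 3) (by norm_num) 0
  simpa using this

lemma euler : ∑' p : ℕ × ℕ, 1/(((p.1:ℝ)+1)*((p.1:ℝ)+p.2+2)^2) = z3 := by
  have h := summable_z21.hasSum
  set Z := ∑' p : ℕ × ℕ, 1/(((p.1:ℝ)+1)*((p.1:ℝ)+p.2+2)^2) with hZ
  have h1 := hsum_anti h
  have h2 : HasSum (fun m : ℕ => Hs 1 m / ((m:ℝ)+1)^2) Z := by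
    rw [← hasSum_nat_add_iff' 1]
    simp only [range_one, sum_singleton, Hs_zero, zero_div, sub_zero]
    refine h1.congr_fun' fun m => ?_
    rw [Hs_one, sum_div]
    rw [← Finset.Nat.sum_antidiagonal_eq_sum_range_succ (fun a _ => 1/((a:ℝ)+1) / (((m+1:ℕ):ℝ)+1)^2) m]
    refine sum_congr rfl fun p hp => ?_
    rw [HasAntidiagonal.mem_antidiagonal] at hp
    have hi : (m:ℝ) = p.1 + p.2 := by rw [← hp]; push_cast; ring
    push_cast
    rw [hi, div_div]
    ring_nf
  have h3 := h.add (((Equiv.prodComm ℕ ℕ).hasSum_iff).2 h)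
  have h4 : HasSum (fun r : ℕ => Hs 1 (r+1) / ((r:ℝ)+1)^2) (Z+Z) := by
    refine HasSum.prod_fiberwise h3 fun r => ?_
    have t := (tele (c := 0) le_rfl (n := r+1) (by omega)).mul_left (1/((r:ℝ)+1))
    have e : (1/((r:ℝ)+1)) * (1/((r+1:ℕ):ℝ) * ∑ i ∈ range (r+1), 1/(0+(i:ℝ)+1)) = Hs 1 (r+1) / ((r:ℝ)+1)^2 := by
      simp only [zero_add, ← Hs_one]
      push_cast
      field_simp
    rw [e] at t
    refine t.congr_fun' fun s => ?_
    simp only [Function.comp, Equiv.prodComm_apply, Prod.swap]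
    push_cast
    rw [show (s:ℝ)+r+2 = r+s+2 by ring]
    field_simp
    ring
  have h5 := h2.add summable_z3.hasSum
  have h6 : HasSum (fun r : ℕ => Hs 1 (r+1) / ((r:ℝ)+1)^2) (Z + z3) := by
    refine h5.congr_fun' fun r => ?_
    rw [Hs_succ]
    field_simp
  have := h4.unique h6
  linarith

noncomputable def Th (n : ℕ) : ℝ := ∑' r : ℕ, t2 (n+r+1) / ((n:ℝ)+r+1)

lemma Th_zero : HasSum (fun r : ℕ => t2 (0+r+1) / (((0:ℕ):ℝ)+r+1)) z3 := by
  rw [← euler]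
  refine HasSum.prod_fiberwise summable_z21.hasSum fun r => ?_
  have h := (hasSum_t2 (0+r+1)).div_const (((0:ℕ):ℝ)+r+1)
  refine h.congr_fun' fun s => ?_
  push_cast
  rw [div_div]
  ring_nf

lemma hasSum_Th (n : ℕ) : HasSum (fun r : ℕ => t2 (n+r+1) / ((n:ℝ)+r+1)) (Th n) := by
  have h := (summable_nat_add_iff n).2 Th_zero.summable
  refine (h.congr fun r => ?_).hasSum
  rw [show 0 + (r+n)+1 = n+r+1 by ring]
  push_cast
  ring_nf

lemma Th_succ (n : ℕ) : Th (n+1) = Th n - t2 (n+1) / ((n:ℝ)+1) := by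
  have h := (hasSum_nat_add_iff' (f := fun r : ℕ => t2 (n+r+1) / ((n:ℝ)+r+1)) 1).2 (hasSum_Th n)
  simp only [range_one, sum_singleton, Nat.cast_zero, add_zero] at h
  refine HasSum.unique (hasSum_Th (n+1)) (h.congr_fun' fun s => ?_)
  rw [show n + (s+1)+1 = n+1+s+1 by ring]
  push_cast; ring_nf

lemma Q_eq (n : ℕ) : Th n + Hs 1 n * t2 n = z3 - ∑ m ∈ range n, Hs 1 m / ((m:ℝ)+1)^2 := by
  induction n with
  | zero =>
    simp only [Hs_zero, zero_mul, add_zero, range_zero, sum_empty, sub_zero]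
    exact (hasSum_Th 0).unique Th_zero
  | succ n ih =>
    rw [sum_range_succ, ← sub_sub, ← ih, Th_succ, Hs_succ]
    have h := t2_succ n
    rw [pow_one]
    have : (1/((n:ℝ)+1)) * t2 (n+1) = t2 (n+1) / ((n:ℝ)+1) := by ring
    rw [add_mul, this, h]
    ring

/-- one-variable partial fraction sum -/
lemma tele2 (b n : ℕ) (hn : n ≠ 0) :
    HasSum (fun s : ℕ => 1/(((b:ℝ)+s+1+n)*((b:ℝ)+s+1)^2))
      ((1/(n:ℝ)) * (t2 b - (1/(n:ℝ)) * ∑ i ∈ range n, 1/((b:ℝ)+i+1))) := by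
  have h := ((hasSum_t2 b).sub (tele (c := b) (by positivity) hn)).mul_left (1/(n:ℝ))
  have hn' : (n:ℝ) ≠ 0 := by exact_mod_cast hn
  refine h.congr_fun' fun s => ?_
  field_simp
  ring

noncomputable def VV (n : ℕ) : ℝ := ∑ i ∈ range n, (1/((i:ℝ)+1)^2) * ∑ l ∈ range (i+1), 1 / ((n:ℝ) + l + 1)^1

/-- sums for the derivative part, first over s -/
lemma dpart1 (n r : ℕ) (hn : n ≠ 0) :
    HasSum (fun s : ℕ => 1 / (((n:ℝ)+r+s+2+n) * (((n:ℝ)+r+s+2) * ((n:ℝ)+r+1))) * (1/((n:ℝ)+r+s+2) + 1/((n:ℝ)+r+1)))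
      ((1/(n:ℝ)) * (t2 (n+r+1) / ((n:ℝ)+r+1) - 1/((n:ℝ)+r+1) * ((1/(n:ℝ)) * ∑ i ∈ range n, 1/((n:ℝ)+r+i+2)))
       + (1/(n:ℝ)) * ∑ i ∈ range n, 1/(((n:ℝ)+r+1+(i+1:ℕ)) * ((n:ℝ)+r+1)^2)) := by
  have h1 := (tele2 (n+r+1) n hn).mul_left (1/((n:ℝ)+r+1))
  have h2 := (rs1 (c := n) (by positivity) hn r).mul_left (1/((n:ℝ)+r+1))
  have h := h1.add h2
  have e : (1/((n:ℝ)+r+1)) * ((1/(n:ℝ)) * (t2 (n+r+1) - (1/(n:ℝ)) * ∑ i ∈ range n, 1/(((n+r+1:ℕ):ℝ)+i+1))) +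
     (1/((n:ℝ)+r+1)) * (1/((n:ℝ)+r+1) * ((1/(n:ℝ)) * ∑ i ∈ range n, 1/((n:ℝ)+r+i+2)))
     = ((1/(n:ℝ)) * (t2 (n+r+1) / ((n:ℝ)+r+1) - 1/((n:ℝ)+r+1) * ((1/(n:ℝ)) * ∑ i ∈ range n, 1/((n:ℝ)+r+i+2)))
       + (1/(n:ℝ)) * ∑ i ∈ range n, 1/(((n:ℝ)+r+1+(i+1:ℕ)) * ((n:ℝ)+r+1)^2)) := by
    have e1 : ∑ i ∈ range n, 1/(((n+r+1:ℕ):ℝ)+i+1) = ∑ i ∈ range n, 1/((n:ℝ)+r+i+2) :=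
      sum_congr rfl fun i _ => by push_cast; ring_nf
    have e2 : ∑ i ∈ range n, 1/(((n:ℝ)+r+1+(i+1:ℕ)) * ((n:ℝ)+r+1)^2) = (1/((n:ℝ)+r+1))^2 * ∑ i ∈ range n, 1/((n:ℝ)+r+i+2) := by
      rw [mul_sum]
      refine sum_congr rfl fun i _ => ?_
      push_cast
      rw [show (n:ℝ)+r+1+(i+1) = n+r+i+2 by ring, one_div_pow, one_div_mul_one_div, mul_comm]
    rw [e1, e2]
    ring
  rw [e] at h
  refine h.congr_fun' fun s => ?_
  push_cast
  have e3 : (n:ℝ)+r+1+s+1 = n+r+s+2 := by ring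
  rw [e3]
  field_simp

lemma dpart2 (n : ℕ) :
    HasSum (fun r : ℕ => ((1/(n:ℝ)) * (t2 (n+r+1) / ((n:ℝ)+r+1) - 1/((n:ℝ)+r+1) * ((1/(n:ℝ)) * ∑ i ∈ range n, 1/((n:ℝ)+r+i+2)))
       + (1/(n:ℝ)) * ∑ i ∈ range n, 1/(((n:ℝ)+r+1+(i+1:ℕ)) * ((n:ℝ)+r+1)^2)))
     ((1/(n:ℝ)) * (z3 - ∑ m ∈ range n, Hs 1 m / ((m:ℝ)+1)^2 - Psi n n - VV n)) := by
  have h1 := ((hasSum_Th n).sub (rs2 (c := n) (by positivity) n)).mul_left (1/(n:ℝ))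
  have h2 := (hasSum_sum fun i (_ : i ∈ range n) => tele2 n (i+1) (by omega)).mul_left (1/(n:ℝ))
  have h := h1.add h2
  have e : 1/(n:ℝ) * (Th n - Psi n n) + 1/(n:ℝ) * ∑ i ∈ range n, ((1/((i+1:ℕ):ℝ)) * (t2 n - (1/((i+1:ℕ):ℝ)) * ∑ l ∈ range (i+1), 1/((n:ℝ)+l+1)))
     = ((1/(n:ℝ)) * (z3 - ∑ m ∈ range n, Hs 1 m / ((m:ℝ)+1)^2 - Psi n n - VV n)) := by
    rw [← Q_eq, VV, Hs_one, sum_mul, ← mul_add]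
    congr 1
    have e3 : ∑ i ∈ range n, ((1/((i+1:ℕ):ℝ)) * (t2 n - (1/((i+1:ℕ):ℝ)) * ∑ l ∈ range (i+1), 1/((n:ℝ)+l+1)))
        = ∑ i ∈ range n, 1/((i:ℝ)+1) * t2 n
          - ∑ i ∈ range n, (1/((i:ℝ)+1)^2) * ∑ l ∈ range (i+1), 1 / ((n:ℝ) + l + 1)^1 := by
      rw [← sum_sub_distrib]
      refine sum_congr rfl fun i _ => ?_
      push_cast
      simp only [pow_one]
      rw [← one_div_pow]
      ring
    rw [e3]
    ring
  rw [e] at h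
  exact h

lemma eval_A5 (N : ℕ) : HasSum (fun m : ℕ => ((N:ℝ)+1) * (1/((m:ℝ)+1))^(N+2) * Psi (m+1) ((m+1:ℕ):ℝ) -
    (1/((m:ℝ)+1))^(N+1) * ((1/((m:ℝ)+1)) * (z3 - ∑ k ∈ range (m+1), Hs 1 k / ((k:ℝ)+1)^2 - Psi (m+1) ((m+1:ℕ):ℝ) - VV (m+1))))
    (∑' t, A5 N t) := by
  let f1 : ℕ × ℕ × ℕ → ℝ := fun t => (1 / (2*(t.1:ℝ)+t.2.1+t.2.2+4)) *
      (1 / ((t.1:ℝ)+1))^(N+2) * (1/(((t.1:ℝ)+t.2.1+t.2.2+3) * ((t.1:ℝ)+t.2.1+2)))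
  let f2 : ℕ × ℕ × ℕ → ℝ := fun t => (1 / (2*(t.1:ℝ)+t.2.1+t.2.2+4)) *
    ((1 / ((t.1:ℝ)+1))^(N+1) * (1/(((t.1:ℝ)+t.2.1+t.2.2+3) * ((t.1:ℝ)+t.2.1+2)))
      * (1/((t.1:ℝ)+t.2.1+t.2.2+3) + 1/((t.1:ℝ)+t.2.1+2)))
  have s1 : Summable f1 := summable_diag (e := N+2) (by omega) f1 fun t => ⟨by positivity, le_rfl⟩
  have s2 : Summable f2 := by
    refine summable_diag (e := N+1) (by omega) f2 fun t => ⟨by positivity, ?_⟩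
    have : 1/((t.1:ℝ)+t.2.1+t.2.2+3) + 1/((t.1:ℝ)+t.2.1+2) ≤ 1 := by
      have a : 1/((t.1:ℝ)+t.2.1+t.2.2+3) ≤ 1/2 := by
        apply one_div_le_one_div_of_le (by norm_num)
        have : (0:ℝ) ≤ (t.1:ℝ)+t.2.1+t.2.2 := by positivity
        linarith
      have b : 1/((t.1:ℝ)+t.2.1+2) ≤ 1/2 := by
        apply one_div_le_one_div_of_le (by norm_num)
        have : (0:ℝ) ≤ (t.1:ℝ)+t.2.1 := by positivity
        linarith
      linarith
    calc f2 t ≤ (1 / (2*(t.1:ℝ)+t.2.1+t.2.2+4)) *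
    ((1 / ((t.1:ℝ)+1))^(N+1) * (1/(((t.1:ℝ)+t.2.1+t.2.2+3) * ((t.1:ℝ)+t.2.1+2))) * 1) := by
          simp only [f2]
          gcongr
      _ = _ := by ring
  have e5 : A5' N = fun t => ((N:ℝ)+1) * f1 t - f2 t := by
    funext t
    simp only [A5', f1, f2]
    ring
  have h0 := (s1.hasSum.mul_left ((N:ℝ)+1)).sub s2.hasSum
  rw [← e5] at h0
  rw [(hasSum_A5 N h0).tsum_eq]
  have g1 : HasSum (fun m : ℕ => (1/((m:ℝ)+1))^(N+2) * Psi (m+1) ((m+1:ℕ):ℝ)) (∑' t, f1 t) := by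
    refine HasSum.prod_fiberwise s1.hasSum fun x => ?_
    have h0 : (0:ℝ) ≤ ((x+1:ℕ):ℝ) := by positivity
    refine hsum_prod (s1.prod_factor x) (fun r => ?_) ((rs2 h0 (x+1)).mul_left _)
    refine ((rs1 h0 (n := x+1) (by omega) r).mul_left _).congr_fun' fun s => ?_
    simp only [f1]
    push_cast
    rw [show (x:ℝ)+1+r+s+2+(x+1) = 2*x+r+s+4 by ring, show (x:ℝ)+1+r+s+2 = x+r+s+3 by ring,
      show (x:ℝ)+1+r+1 = x+r+2 by ring]
    simp only [one_div, mul_inv]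
    ring
  have g2 : HasSum (fun m : ℕ => (1/((m:ℝ)+1))^(N+1) * ((1/((m+1:ℕ):ℝ)) * (z3 - ∑ k ∈ range (m+1), Hs 1 k / ((k:ℝ)+1)^2 - Psi (m+1) ((m+1:ℕ):ℝ) - VV (m+1)))) (∑' t, f2 t) := by
    refine HasSum.prod_fiberwise s2.hasSum fun x => ?_
    refine hsum_prod (s2.prod_factor x) (fun r => ?_) ((dpart2 (x+1)).mul_left _)
    refine ((dpart1 (x+1) r (by omega)).mul_left _).congr_fun' fun s => ?_
    simp only [f2]
    push_cast
    rw [show (x:ℝ)+1+r+s+2+(x+1) = 2*x+r+s+4 by ring, show (x:ℝ)+1+r+s+2 = x+r+s+3 by ring,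
      show (x:ℝ)+1+r+1 = x+r+2 by ring]
    simp only [one_div, mul_inv]
    ring
  refine ((g1.mul_left ((N:ℝ)+1)).sub g2).congr_fun' fun m => ?_
  push_cast
  ring

lemma mzv_one_hasSum (a : ℕ) (ha : 2 ≤ a) : HasSum (fun m : ℕ => (1/((m:ℝ)+1))^a) (mzv ![a]) := by
  rw [mzv_one]
  have h := summable_inv_pow ha 0
  have h' : Summable (fun x : ℕ => 1/((x:ℝ)+1)^a) := by simpa using h
  refine h'.hasSum.congr_fun' fun m => ?_
  rw [one_div_pow]

lemma summable_mzv2 {a b : ℕ} (ha : 2 ≤ a) (hb : 1 ≤ b) :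
    Summable (fun x : ℕ × ℕ => 1 / ((x.1:ℝ)+x.2+2)^a * (1 / ((x.1:ℝ)+1)^b)) := by
  refine Summable.of_nonneg_of_le (fun t => by positivity) (fun t => ?_) summable_z21
  have h1 : (0:ℝ) ≤ t.1 := by positivity
  have h2 : (0:ℝ) ≤ t.2 := by positivity
  have e1 := one_div_pow_le (z := (t.1:ℝ)+t.2+2) (by linarith) ha
  have e2 := one_div_pow_le (z := (t.1:ℝ)+1) (by linarith) hb
  rw [one_div_pow, one_div_pow] at e1 e2
  calc _ ≤ 1 / ((t.1:ℝ)+t.2+2)^2 * (1 / ((t.1:ℝ)+1)^1) := by gcongr ?_ * ?_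
    _ = _ := by rw [one_div_mul_one_div, pow_one, mul_comm]

lemma mzv_two_a (a : ℕ) (ha : 2 ≤ a) : HasSum (fun m : ℕ => (1/((m:ℝ)+1))^a * Hs 2 m) (mzv ![a, 2]) := by
  rw [mzv_two]
  have h1 := hsum_anti (summable_mzv2 ha (b := 2) (by norm_num)).hasSum
  rw [← hasSum_nat_add_iff' 1]
  simp only [range_one, sum_singleton, Hs_zero, mul_zero, sub_zero]
  refine h1.congr_fun' fun m => ?_
  rw [Hs, mul_sum]
  rw [← Finset.Nat.sum_antidiagonal_eq_sum_range_succ (fun i _ => (1 / (((m+1:ℕ):ℝ)+1))^a * (1/((i:ℝ)+1)^2)) m]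
  refine sum_congr rfl fun p hp => ?_
  rw [HasAntidiagonal.mem_antidiagonal] at hp
  have hi : (m:ℝ) = p.1 + p.2 := by rw [← hp]; push_cast; ring
  push_cast
  rw [hi, one_div_pow]
  ring_nf

lemma mzv_two_b (b : ℕ) (hb : 1 ≤ b) : HasSum (fun m : ℕ => (1/((m:ℝ)+1))^b * (z3 - Hs 3 (m+1))) (mzv ![3, b]) := by
  rw [mzv_two]
  refine HasSum.prod_fiberwise (summable_mzv2 (by norm_num) hb).hasSum fun m => ?_
  have h := ((hasSum_nat_add_iff' (m+1)).2 summable_z3.hasSum).mul_left ((1/((m:ℝ)+1))^b)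
  refine h.congr_fun' fun s => ?_
  push_cast
  rw [one_div_pow]
  ring_nf

lemma swap_sum (f : ℕ → ℝ) (n : ℕ) :
    ∑ i ∈ range n, (1/((i:ℝ)+1)) * ∑ l ∈ range (i+1), f l = ∑ l ∈ range n, (Hs 1 n - Hs 1 l) * f l := by
  induction n with
  | zero => simp
  | succ n ih =>
    rw [sum_range_succ, ih, sum_range_succ f, sum_range_succ (fun l => (Hs 1 (n+1) - Hs 1 l) * f l), Hs_succ, mul_add, mul_sum,
      ← add_assoc, ← sum_add_distrib]
    congr 1
    · refine sum_congr rfl fun l _ => ?_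
      ring
    · ring

lemma core (m : ℕ) : ∑ l ∈ range m, (Hs 1 (m+1) - Hs 1 l) * GG m l
    + 2 * ∑ i ∈ range (m+1), (1/((i:ℝ)+1)) * ∑ l ∈ range (i+1),
      ((1/((m:ℝ)+l+2)) * (Hs 1 (l+1) - Hs 1 m + 1/((m:ℝ)+l+2)))
    = 1/((m:ℝ)+1)^3 + 2 * ∑ i ∈ range (m+1), (1/((i:ℝ)+1)) * ∑ l ∈ range (i+1), 1 / (((m+1:ℕ):ℝ) + l + 1)^2 := by
  rw [swap_sum, swap_sum, sum_range_succ _ m, sum_range_succ (fun l : ℕ => (Hs 1 (m+1) - Hs 1 l) * (1 / (((m+1:ℕ):ℝ) + l + 1)^2)) m]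
  have e : ∑ l ∈ range m, (Hs 1 (m+1) - Hs 1 l) * GG m l + 2 * ∑ l ∈ range m, (Hs 1 (m+1) - Hs 1 l) *
      ((1/((m:ℝ)+l+2)) * (Hs 1 (l+1) - Hs 1 m + 1/((m:ℝ)+l+2)))
      = 2 * ∑ l ∈ range m, (Hs 1 (m+1) - Hs 1 l) * (1 / (((m+1:ℕ):ℝ) + l + 1)^2) := by
    rw [mul_sum, mul_sum, ← sum_add_distrib]
    refine sum_congr rfl fun l _ => ?_
    rw [show ((m+1:ℕ):ℝ) + l + 1 = m+l+2 by push_cast; ring, GG]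
    field_simp
    ring
  rw [mul_add, mul_add, ← add_assoc, e, Hs_succ]
  push_cast
  rw [show (m:ℝ)+m+2 = 2*(m+1) by ring, show (m:ℝ)+1+m+1 = 2*(m+1) by ring]
  field_simp
  ring

lemma Psi_diag (n : ℕ) : Psi n n = (1/(n:ℝ)) * (Hs 2 n / 2) := by
  rw [Psi, ← finB]
  simp only [pow_one]

lemma final_sum (N : ℕ) :
    (∑ a ∈ Finset.Icc 2 (N+5 - 3), ∑ b ∈ Finset.Icc 1 (N+5 - a - 2),
      ∑ c ∈ Finset.Icc 1 (N+5 - a - b - 1),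
        (2 : ℝ) ^ c * mzv ![a, b, c, N+5 - a - b - c])
    = (((N:ℝ)+4) / 2) * mzv ![N+5] + (((N:ℝ)+2) / 2) * mzv ![N+3, 2] - mzv ![3, N+2] := by
  have hL := hasSum_tS N (hasSum_tT N)
  have h5 : Summable (A5 N) := by
    have e : A5 N = fun t => tS N t - A1 N t - A2 N t - A3 N t - A3 N (sw t) := by
      funext t
      rw [tS_decomp]; ring
    rw [e]
    exact (((hL.summable.sub (summable_A1 N)).sub (summable_A2 N)).sub (summable_A3 N)).sub
      ((sw.summable_iff (f := A3 N)).2 (summable_A3 N))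
  have hD := (((((summable_A1 N).hasSum.add (summable_A2 N).hasSum).add (summable_A3 N).hasSum).add
    ((sw.hasSum_iff (f := A3 N)).2 (summable_A3 N).hasSum)).add h5.hasSum).congr_fun' (tS_decomp N)
  rw [hL.unique hD]
  have hE := ((((eval_A1 N).add (eval_A2 N)).add (eval_A3 N)).add (eval_A3 N)).add (eval_A5 N)
  have hR := (((mzv_one_hasSum (N+5) (by omega)).mul_left (((N:ℝ)+4) / 2)).add
    ((mzv_two_a (N+3) (by omega)).mul_left (((N:ℝ)+2) / 2))).sub (mzv_two_b (N+2) (by omega))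
  refine hE.unique (hR.congr_fun' fun m => ?_)
  have c := core m
  have f := finF (m+1)
  have p := Psi_diag (m+1)
  have e1 : ∑ l ∈ range m, (Hs 1 (m+1) - Hs 1 l) * GG m l
      = Hs 1 (m+1) * ∑ l ∈ range m, GG m l - ∑ l ∈ range m, Hs 1 l * GG m l := by
    rw [mul_sum, ← sum_sub_distrib]
    refine sum_congr rfl fun l _ => ?_
    ring
  rw [e1] at c
  rw [p, C3, VV, Hs_succ 2 m]
  rw [← one_div_pow] at c
  rw [← one_div_pow ((m:ℝ)+1) 2, Nat.cast_succ m]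
  rw [Nat.cast_succ m] at c f
  linear_combination ((1/((m:ℝ)+1))^(N+2)) * (c + f)

end Helpers

theorem weighted_sum_depth4_2c (w : ℕ) (hw : 5 ≤ w)
    (q u : ℕ) (hq : q = w - 3) (hu : u = w - 2) :
    (∑ a ∈ Finset.Icc 2 (w - 3), ∑ b ∈ Finset.Icc 1 (w - a - 2),
      ∑ c ∈ Finset.Icc 1 (w - a - b - 1),
        (2 : ℝ) ^ c * mzv ![a, b, c, w - a - b - c])
    = (((w : ℝ) - 1) / 2) * mzv ![w] + ((q : ℝ) / 2) * mzv ![u, 2] - mzv ![3, q] := by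
  obtain ⟨N, rfl⟩ : ∃ N, w = N + 5 := ⟨w - 5, by omega⟩
  obtain rfl : q = N + 2 := by omega
  obtain rfl : u = N + 3 := by omega
  have h := final_sum N
  rw [h]
  push_cast
  ring
end
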